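/- arXiv:1812.09144 — 11 statements merged into one kernel-verified Lean document; each statement's English description precedes it below -/
import Mathlib

section
/- Williamson's theorem: for every n ≥ 1 and every symmetric positive definite matrix Γ ∈ ℝ^{2n×2n}, there exists a symplectic matrix S ∈ Sp(2n,ℝ) and positive reals γ_1, …, γ_n such that SᵀΓS = diag(𝒢, 𝒢), where 𝒢 = diag(γ_1, …, γ_n). -/
open Matrix

/-! Write `Γ = Bᵀ B` with `B` invertible. The matrix `M = B⁻ᵀ Ω B⁻¹` is skew-symmetric and
invertible, so in a suitable orthonormal basis (the columns of an orthogonal matrix `O`) it takes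
the form `[[0, -D], [D, 0]]` with `D = diag(d₁, …, dₙ)` positive (`exists_skew_normal_form`).
Then `S = B⁻¹ O diag(D^(-1/2), D^(-1/2))` is symplectic and `Sᵀ Γ S = diag(D⁻¹, D⁻¹)`.

The normal form is built by induction on `n`, splitting off one plane at a time. The square of a
skew-adjoint operator `A` is self-adjoint, so it has a unit eigenvector `e`. With `d = ‖A e‖` and
`f = d⁻¹ A e`, skewness shows that `(e, f)` is orthonormal and that `A e = d f`, `A f = -d e`.
The orthogonal complement of the plane spanned by `e` and `f` is then again invariant under `A`. -/

open scoped InnerProductSpace MatrixOrder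

/-- An injective skew-adjoint operator on a nontrivial finite-dimensional space rotates some
plane, with a positive scaling factor. -/
lemma exists_skew_plane {E : Type*} [NormedAddCommGroup E] [InnerProductSpace ℝ E]
    [FiniteDimensional ℝ E] [Nontrivial E] (A : E →ₗ[ℝ] E)
    (hA : ∀ x y, ⟪A x, y⟫_ℝ = -⟪x, A y⟫_ℝ) (hinj : Function.Injective A) :
    ∃ (e f : E) (d : ℝ), 0 < d ∧ ⟪e, e⟫_ℝ = 1 ∧ ⟪f, f⟫_ℝ = 1 ∧ ⟪e, f⟫_ℝ = 0 ∧
      A e = d • f ∧ A f = -(d • e) := by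
  have hT : (A ∘ₗ A).IsSymmetric := by
    intro x y
    simp [hA]
  let b := hT.eigenvectorBasis rfl
  let i : Fin (Module.finrank ℝ E) := ⟨0, Module.finrank_pos⟩
  obtain ⟨μ, hμ⟩ : ∃ μ : ℝ, A (A (b i)) = μ • b i := ⟨_, hT.apply_eigenvectorBasis rfl i⟩
  have hone : ⟪b i, b i⟫_ℝ = 1 := by
    rw [real_inner_self_eq_norm_sq, b.norm_eq_one, one_pow]
  have hne : A (b i) ≠ 0 := fun h => by
    have h0 : b i = 0 := hinj (by rw [h, map_zero])
    simp [h0] at hone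
  have hd : 0 < ‖A (b i)‖ := norm_pos_iff.2 hne
  have hμd : μ = -‖A (b i)‖ ^ 2 := by
    have h := hA (b i) (A (b i))
    rw [hμ, real_inner_smul_right, hone, real_inner_self_eq_norm_sq] at h
    linarith
  have horth : ⟪b i, A (b i)⟫_ℝ = 0 := by
    have h := hA (b i) (b i)
    rw [real_inner_comm] at h
    linarith
  refine ⟨b i, ‖A (b i)‖⁻¹ • A (b i), ‖A (b i)‖, hd, hone, ?_, ?_, ?_, ?_⟩
  · rw [real_inner_smul_left, real_inner_smul_right, real_inner_self_eq_norm_sq]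
    field_simp
  · rw [real_inner_smul_right, horth, mul_zero]
  · rw [smul_inv_smul₀ hd.ne']
  · rw [map_smul, hμ, hμd, smul_smul, ← neg_smul]
    congr 1
    field_simp

/-- Real normal form of an injective skew-adjoint operator in dimension `2n`. -/
lemma exists_skew_normal_form (n : ℕ) {E : Type*} [NormedAddCommGroup E] [InnerProductSpace ℝ E]
    [FiniteDimensional ℝ E] (hE : Module.finrank ℝ E = 2 * n) (A : E →ₗ[ℝ] E)
    (hA : ∀ x y, ⟪A x, y⟫_ℝ = -⟪x, A y⟫_ℝ) (hinj : Function.Injective A) :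
    ∃ (e f : Fin n → E) (d : Fin n → ℝ), (∀ i, 0 < d i) ∧
      (∀ i j, ⟪e i, e j⟫_ℝ = if i = j then 1 else 0) ∧
      (∀ i j, ⟪f i, f j⟫_ℝ = if i = j then 1 else 0) ∧
      (∀ i j, ⟪e i, f j⟫_ℝ = 0) ∧
      (∀ i, A (e i) = d i • f i) ∧ (∀ i, A (f i) = -(d i • e i)) := by
  induction n generalizing E with
  | zero => exact ⟨Fin.elim0, Fin.elim0, Fin.elim0, by simp⟩
  | succ n ih =>
    have : Nontrivial E := Module.nontrivial_of_finrank_pos (R := ℝ) (by omega)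
    obtain ⟨e₀, f₀, d₀, hd₀, hee, hff, hef, hAe, hAf⟩ := exists_skew_plane A hA hinj
    have hfe : ⟪f₀, e₀⟫_ℝ = 0 := by rw [real_inner_comm, hef]
    let P : Submodule ℝ E := Submodule.span ℝ (Set.range ![e₀, f₀])
    have hP : Module.finrank ℝ P = 2 := by
      have ho : Orthonormal ℝ ![e₀, f₀] := by
        rw [orthonormal_iff_ite]
        simp [Fin.forall_fin_two, hee, hff, hef, hfe,
          -inner_self_eq_norm_sq_to_K]
      simpa using finrank_span_eq_card ho.linearIndependent
    have hmem : ∀ x, x ∈ Pᗮ ↔ ⟪e₀, x⟫_ℝ = 0 ∧ ⟪f₀, x⟫_ℝ = 0 := by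
      intro x
      rw [← Submodule.span_singleton_le_iff_mem, ← Submodule.isOrtho_iff_le,
        Submodule.isOrtho_comm, Submodule.isOrtho_span]
      simp [and_comm]
    have hdim : Module.finrank ℝ Pᗮ = 2 * n := by
      have := P.finrank_add_finrank_orthogonal
      omega
    have hinv : ∀ x ∈ Pᗮ, A x ∈ Pᗮ := by
      intro x hx
      rw [hmem] at hx ⊢
      have h1 := hA e₀ x
      have h2 := hA f₀ x
      rw [hAe, real_inner_smul_left, hx.2] at h1
      rw [hAf, inner_neg_left, real_inner_smul_left, hx.1] at h2
      constructor <;> linarith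
    obtain ⟨e, f, d, hd, h1, h2, h3, h4, h5⟩ := ih hdim (A.restrict hinv)
      (fun x y => hA x y) (fun x y h => Subtype.ext (hinj (congrArg Subtype.val h)))
    have he := fun i => (hmem (e i)).1 (e i).2
    have hf := fun i => (hmem (f i)).1 (f i).2
    refine ⟨Fin.cons e₀ fun i => e i, Fin.cons f₀ fun i => f i, Fin.cons d₀ d, ?_, ?_, ?_, ?_,
      ?_, ?_⟩
    · simp [Fin.forall_fin_succ, hd₀, hd]
    · have h1' : ∀ i j, ⟪(e i : E), e j⟫_ℝ = if i = j then 1 else 0 := h1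
      simp [Fin.forall_fin_succ, h1', hee, he, fun i => real_inner_comm e₀ (e i : E),
        (Fin.succ_ne_zero _).symm, -inner_self_eq_norm_sq_to_K]
    · have h2' : ∀ i j, ⟪(f i : E), f j⟫_ℝ = if i = j then 1 else 0 := h2
      simp [Fin.forall_fin_succ, h2', hff, hf, fun i => real_inner_comm f₀ (f i : E),
        (Fin.succ_ne_zero _).symm, -inner_self_eq_norm_sq_to_K]
    · have h3' : ∀ i j, ⟪(e i : E), f j⟫_ℝ = 0 := h3
      simp [Fin.forall_fin_succ, h3', hef, hf, he, fun i => real_inner_comm f₀ (e i : E)]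
    · have h4' : ∀ i, A (e i) = d i • (f i : E) := fun i => congrArg Subtype.val (h4 i)
      simp [Fin.forall_fin_succ, h4', hAe]
    · have h5' : ∀ i, A (f i) = -(d i • (e i : E)) := fun i => congrArg Subtype.val (h5 i)
      simp [Fin.forall_fin_succ, h5', hAf]

/-- Matrix version of `exists_skew_normal_form`: the columns of `O` are the orthonormal basis. -/
lemma exists_orthogonal_skew_normal_form {n : ℕ} (M : Matrix (Fin n ⊕ Fin n) (Fin n ⊕ Fin n) ℝ)
    (hM : Mᵀ = -M) (hu : IsUnit M) :
    ∃ (O : Matrix (Fin n ⊕ Fin n) (Fin n ⊕ Fin n) ℝ) (d : Fin n → ℝ), (∀ i, 0 < d i) ∧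
      Oᵀ * O = 1 ∧ Oᵀ * M * O = fromBlocks 0 (-diagonal d) (diagonal d) 0 := by
  have hinner : ∀ x y : EuclideanSpace ℝ (Fin n ⊕ Fin n), ⟪x, y⟫_ℝ = x.ofLp ⬝ᵥ y.ofLp := by
    intro x y
    rw [EuclideanSpace.inner_eq_star_dotProduct, dotProduct_comm]
    simp
  obtain ⟨e, f, d, hd, h1, h2, h3, h4, h5⟩ :=
    exists_skew_normal_form n (E := EuclideanSpace ℝ (Fin n ⊕ Fin n)) (by simp; ring)
      (Matrix.toEuclideanLin M)
      (by
        intro x y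
        rw [hinner, hinner, Matrix.ofLp_toLpLin, Matrix.toLin'_apply, Matrix.ofLp_toLpLin, Matrix.toLin'_apply,
          dotProduct_mulVec, ← mulVec_transpose, hM, neg_mulVec, neg_dotProduct, neg_neg])
      (by
        intro x y h
        have h' := congrArg WithLp.ofLp h
        rw [Matrix.ofLp_toLpLin, Matrix.toLin'_apply, Matrix.ofLp_toLpLin, Matrix.toLin'_apply] at h'
        exact WithLp.ofLp_injective 2 (Matrix.mulVec_injective_of_isUnit hu h'))
  let b : Fin n ⊕ Fin n → EuclideanSpace ℝ (Fin n ⊕ Fin n) := Sum.elim e f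
  let O : Matrix (Fin n ⊕ Fin n) (Fin n ⊕ Fin n) ℝ := Matrix.of fun i j => b j i
  have hO : Oᵀ * O = 1 := by
    ext i j
    have : (Oᵀ * O) i j = ⟪b i, b j⟫_ℝ := by rw [hinner]; rfl
    rw [this]
    rcases i with i | i <;> rcases j with j | j
    · simp [b, h1, Matrix.one_apply]
    · simp [b, h3]
    · simp [b, h3, real_inner_comm]
    · simp [b, h2, Matrix.one_apply]
  have hMO : M * O = O * fromBlocks 0 (-diagonal d) (diagonal d) 0 := by
    ext i j
    have : (M * O) i j = (Matrix.toEuclideanLin M (b j)) i := by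
      rw [Matrix.ofLp_toLpLin, Matrix.toLin'_apply]; rfl
    rw [this]
    rcases j with j | j
    · simp [b, O, h4, Matrix.mul_apply, Matrix.diagonal_apply, mul_comm]
    · simp [b, O, h5, Matrix.mul_apply, Matrix.diagonal_apply, mul_comm]
  exact ⟨O, d, hd, hO, by rw [Matrix.mul_assoc, hMO, ← Matrix.mul_assoc, hO, Matrix.one_mul]⟩

/-- **Williamson's theorem.** For every `n ≥ 1` and every symmetric positive definite
matrix `Γ ∈ ℝ^{2n×2n}`, there is a symplectic matrix `S` (i.e. `Sᵀ Ω S = Ω` for the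
standard symplectic form `Ω = [[0, -I],[I, 0]]`) and positive reals `γ₁, …, γₙ` such that
`Sᵀ Γ S = diag(𝒢, 𝒢)` with `𝒢 = diag(γ₁, …, γₙ)`. -/
theorem williamson {n : ℕ} (hn : 1 ≤ n)
    (Γ : Matrix (Fin n ⊕ Fin n) (Fin n ⊕ Fin n) ℝ) (hΓ : Γ.PosDef)
    (Ω : Matrix (Fin n ⊕ Fin n) (Fin n ⊕ Fin n) ℝ)
    (hΩ : Ω = Matrix.fromBlocks 0 (-1) 1 0) :
    ∃ S : Matrix (Fin n ⊕ Fin n) (Fin n ⊕ Fin n) ℝ,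
      Sᵀ * Ω * S = Ω ∧
      ∃ γ : Fin n → ℝ, (∀ i, 0 < γ i) ∧
        Sᵀ * Γ * S = Matrix.fromBlocks (Matrix.diagonal γ) 0 0 (Matrix.diagonal γ) := by
  obtain ⟨B, hB, hΓB⟩ : ∃ B : Matrix (Fin n ⊕ Fin n) (Fin n ⊕ Fin n) ℝ,
      IsUnit B ∧ Γ = Bᵀ * B := by
    obtain ⟨B, hB, hΓB⟩ :=
      CStarAlgebra.isStrictlyPositive_iff_eq_star_mul_self.1 hΓ.isStrictlyPositive
    exact ⟨B, hB, by rw [hΓB, star_eq_conjTranspose, conjTranspose_eq_transpose_of_trivial]⟩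
  have hΩJ : Ω = J (Fin n) ℝ := hΩ
  obtain ⟨C, hBC, hCB⟩ := isUnit_iff_exists.1 hB
  have hC : IsUnit C := isUnit_iff_exists.2 ⟨B, hCB, hBC⟩
  obtain ⟨O, d, hd, hO, hM⟩ := exists_orthogonal_skew_normal_form (Cᵀ * Ω * C)
    (by simp [hΩJ, J_transpose, Matrix.mul_assoc])
    ((((Matrix.isUnit_transpose C).2 hC).mul
      (hΩJ ▸ (Matrix.isUnit_iff_isUnit_det _).2 (isUnit_det_J (Fin n) ℝ))).mul hC)
  -- `R` rescales the `i`-th plane by `(d i)^(-1/2)`, turning the skew form into `Ω`.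
  let r : Fin n → ℝ := fun i => (√(d i))⁻¹
  let R : Matrix (Fin n ⊕ Fin n) (Fin n ⊕ Fin n) ℝ := fromBlocks (diagonal r) 0 0 (diagonal r)
  have hR : Rᵀ = R := by simp [R]
  have hrr : ∀ i, r i * r i = (d i)⁻¹ := fun i => by
    rw [← mul_inv, Real.mul_self_sqrt (hd i).le]
  have hrdr : ∀ i, r i * d i * r i = 1 := fun i => by
    rw [mul_right_comm, hrr, inv_mul_cancel₀ (hd i).ne']
  refine ⟨C * O * R, ?_, fun i => (d i)⁻¹, fun i => inv_pos.2 (hd i), ?_⟩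
  · calc (C * O * R)ᵀ * Ω * (C * O * R) = R * (Oᵀ * (Cᵀ * Ω * C) * O) * R := by
          simp only [transpose_mul, hR, Matrix.mul_assoc]
      _ = Ω := by
          rw [hM, hΩ]
          simp only [R, fromBlocks_multiply]
          simp [hrdr, -Matrix.diagonal_neg]
  · have hCΓ : Cᵀ * Γ * C = 1 := by
      calc Cᵀ * Γ * C = (B * C)ᵀ * (B * C) := by
            simp only [hΓB, transpose_mul, Matrix.mul_assoc]
        _ = 1 := by simp [hBC]
    calc (C * O * R)ᵀ * Γ * (C * O * R) = R * (Oᵀ * (Cᵀ * Γ * C) * O) * R := by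
          simp only [transpose_mul, hR, Matrix.mul_assoc]
      _ = _ := by
          rw [hCΓ, Matrix.mul_one, hO, Matrix.mul_one]
          simp [R, hrr]
end

section
/- For all x ∈ [1,∞), the entropy function satisfies f(x) ≤ √(x² − 1). -/
/-!
Write `p = √((x + 1) / 2)` and `q = √((x - 1) / 2)`, so that `p² - q² = 1` and
`√(x² - 1) = 2pq`. Then `f(x) = 2 log p + 2 q² log (p / q)`, and the inequality
`2 log s ≤ s - s⁻¹` for `s ≥ 1` (`two_mul_log_le_sub_inv`), applied to `s = p` and to
`s = p / q`, gives `f(x) ≤ (q² + q) / p`. This is at most `2pq` because `1 + q ≤ 2(1 + q²) = 2p²`.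
-/

/-- This is `u ≤ sinh u` at `u = log s`. -/
lemma two_mul_log_le_sub_inv {s : ℝ} (hs : 1 ≤ s) : 2 * Real.log s ≤ s - s⁻¹ := by
  have h := Real.self_le_sinh_iff.mpr (Real.log_nonneg hs)
  rw [Real.sinh_log (by linarith)] at h
  linarith

/-- For all `x ∈ [1,∞)`, the entropy function `f` satisfies `f(x) ≤ √(x² − 1)`. -/
theorem entropy_function_upper_bound (f : ℝ → ℝ)
    (hf : ∀ x : ℝ, 1 < x →
      f x = (x + 1) / 2 * Real.log ((x + 1) / 2) - (x - 1) / 2 * Real.log ((x - 1) / 2))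
    (hf1 : f 1 = 0) :
    ∀ x : ℝ, 1 ≤ x → f x ≤ Real.sqrt (x ^ 2 - 1) := by
  intro x hx
  rcases hx.eq_or_lt with rfl | hx
  · rw [hf1]
    exact Real.sqrt_nonneg _
  rw [hf x hx]
  obtain ⟨p, hp, hpx⟩ : ∃ p : ℝ, 0 < p ∧ (x + 1) / 2 = p ^ 2 :=
    ⟨√((x + 1) / 2), Real.sqrt_pos.mpr (by linarith), (Real.sq_sqrt (by linarith)).symm⟩
  obtain ⟨q, hq, hqx⟩ : ∃ q : ℝ, 0 < q ∧ (x - 1) / 2 = q ^ 2 :=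
    ⟨√((x - 1) / 2), Real.sqrt_pos.mpr (by linarith), (Real.sq_sqrt (by linarith)).symm⟩
  have hpq : p ^ 2 = q ^ 2 + 1 := by linarith
  have hsqrt : Real.sqrt (x ^ 2 - 1) = 2 * p * q := by
    have h : x ^ 2 - 1 = (2 * p * q) ^ 2 := by
      calc x ^ 2 - 1 = 4 * ((x + 1) / 2) * ((x - 1) / 2) := by ring
        _ = (2 * p * q) ^ 2 := by rw [hpx, hqx]; ring
    rw [h, Real.sqrt_sq (by positivity)]
  have hp1 : 1 ≤ p := by nlinarith
  have hqp : 1 ≤ p / q := by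
    rw [one_le_div hq]
    nlinarith
  have h1 := two_mul_log_le_sub_inv hp1
  have h2 := mul_le_mul_of_nonneg_left (two_mul_log_le_sub_inv hqp) (sq_nonneg q)
  rw [Real.log_div hp.ne' hq.ne'] at h2
  have h3 : p - p⁻¹ + q ^ 2 * (p / q - (p / q)⁻¹) = (q ^ 2 + q) / p := by
    field_simp
    linear_combination (1 + q) * hpq
  have h4 : (q ^ 2 + q) / p ≤ 2 * p * q := by
    rw [div_le_iff₀ hp]
    have h : 2 * p * q * p = 2 * q * (q ^ 2 + 1) := by rw [← hpq]; ring
    rw [h]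
    nlinarith [mul_nonneg hq.le (sq_nonneg (q - 1))]
  rw [hpx, hqx, hsqrt, Real.log_pow, Real.log_pow]
  push_cast
  calc p ^ 2 * (2 * Real.log p) - q ^ 2 * (2 * Real.log q)
      = 2 * Real.log p + q ^ 2 * (2 * (Real.log p - Real.log q)) := by rw [hpq]; ring
    _ ≤ 2 * p * q := by linarith
end

section
/- For all x ∈ [1,∞), the entropy function satisfies f(x) ≥ log(x). -/
/-!
Put `a = (x + 1) / 2` and `b = (x - 1) / 2`, so `a - b = 1` and `a + b = x`. Then
`f x - log x = b * (log a - log b) - (log x - log a)`, and the bound `log y ≤ y - 1` at `y = b / a`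
and at `y = x / a = 1 + b / a` gives `b * (log a - log b) ≥ b / a ≥ log x - log a`.
-/


/-- For all `x ∈ [1,∞)`, the entropy function `f` satisfies `f(x) ≥ log x`. -/
theorem entropy_function_lower_bound (f : ℝ → ℝ)
    (hf : ∀ x : ℝ, 1 < x →
      f x = (x + 1) / 2 * Real.log ((x + 1) / 2) - (x - 1) / 2 * Real.log ((x - 1) / 2))
    (hf1 : f 1 = 0) :
    ∀ x : ℝ, 1 ≤ x → Real.log x ≤ f x := by
  intro x hx
  rcases hx.eq_or_lt with rfl | hx
  · simp [hf1]
  rw [hf x hx]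
  have ha : 0 < (x + 1) / 2 := by linarith
  have hb : 0 < (x - 1) / 2 := by linarith
  have h1 := Real.log_le_sub_one_of_pos (div_pos (by linarith : 0 < x) ha)
  have h2 := mul_le_mul_of_nonneg_left
    (Real.log_le_sub_one_of_pos (div_pos hb ha)) hb.le
  rw [Real.log_div (by linarith) ha.ne'] at h1
  rw [Real.log_div hb.ne' ha.ne'] at h2
  -- The two upper bounds are `b / a` and `-b / a`, hence cancel.
  have h3 : (x / ((x + 1) / 2) - 1) + (x - 1) / 2 * ((x - 1) / 2 / ((x + 1) / 2) - 1) = 0 := by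
    have : x + 1 ≠ 0 := by linarith
    field_simp
    ring
  linarith
end

section
/- Spectral decomposition of the discrete Dirichlet Laplacian: for n ≥ 1, let h ∈ ℝ^{n×n} be the matrix with h_{xy} = 2 if x = y, h_{xy} = −1 if |x−y| = 1, and h_{xy} = 0 otherwise, and let O ∈ ℝ^{n×n} have entries O_{jk} = √(2/(n+1))·sin(jkπ/(n+1)). Then O is orthogonal and Oᵀ h O = D, where D is diagonal with D_{jj} = 4·sin²(jπ/(2(n+1))). In particular, the spectrum of h is {4 sin²(jπ/(2(n+1))) : j = 1, …, n} and 0 < h < 4·I. -/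
open Matrix

/-!
The columns of `O` are the discrete sine modes `x ↦ sin (x θ)` with `θ = kπ/(n+1)`. The identity
`2 sin (xθ) - sin ((x-1)θ) - sin ((x+1)θ) = (2 - 2 cos θ) sin (xθ)`, together with the vanishing of
these modes at the boundary points `0` and `n+1`, shows that they are eigenvectors of `h` with
eigenvalue `2 - 2 cos θ = 4 sin² (θ/2)`; in matrix form `h O = O D`
(`sum_dirichlet_mul`, `laplace_sin`).

Orthogonality is `2 sin a sin b = cos (a - b) - cos (a + b)` combined with the telescoping sum of
`cos (i m π / N)` over `i < N`, which equals `(1 - (-1)^m) / 2` when `0 < |m| < 2N`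
(`sum_cos_int`). Both frequencies `p - q` and `p + q` have the same parity, so for `p ≠ q` the two
sums cancel (`sum_sin_mul_sin`).

The spectrum and both Loewner bounds then follow by conjugating with the orthogonal matrix `O`,
since all eigenvalues lie strictly between `0` and `4`.
-/

/-- The telescoping form of the Dirichlet kernel. -/
lemma two_sin_half_mul_sum_cos (θ : ℝ) (N : ℕ) :
    2 * Real.sin (θ / 2) * ∑ i ∈ Finset.range N, Real.cos (i * θ) =
      Real.sin (N * θ - θ / 2) + Real.sin (θ / 2) := by
  induction N with
  | zero => simp
  | succ N ih =>
    rw [Finset.sum_range_succ, mul_add, ih]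
    have e : ((N + 1 : ℕ) : ℝ) * θ - θ / 2 = N * θ + θ / 2 := by push_cast; ring
    rw [e, Real.sin_add, Real.sin_sub]
    ring

lemma sum_cos_int (N : ℕ) (m : ℤ) (h0 : m ≠ 0) (h1 : -(2 * N) < m) (h2 : m < 2 * N) :
    ∑ i ∈ Finset.range N, Real.cos (i * (m * Real.pi / N)) = (1 - (-1) ^ m) / 2 := by
  have hN : (0 : ℝ) < N := by
    have : 0 < N := by omega
    exact_mod_cast this
  have h1' : -(2 * (N : ℝ)) < m := by exact_mod_cast h1
  have h2' : (m : ℝ) < 2 * N := by exact_mod_cast h2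
  have hs : Real.sin (m * Real.pi / N / 2) ≠ 0 := by
    rw [Ne, Real.sin_eq_zero_iff_of_lt_of_lt]
    · have : (m : ℝ) ≠ 0 := by exact_mod_cast h0
      have := Real.pi_ne_zero
      have := hN.ne'
      positivity
    · rw [div_div, lt_div_iff₀ (by positivity)]
      nlinarith [Real.pi_pos]
    · rw [div_div, div_lt_iff₀ (by positivity)]
      nlinarith [Real.pi_pos]
  have key := two_sin_half_mul_sum_cos (m * Real.pi / N) N
  have e : (N : ℝ) * (m * Real.pi / N) = m * Real.pi := by field_simp
  rw [e, Real.sin_int_mul_pi_sub] at key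
  apply mul_left_cancel₀ (mul_ne_zero two_ne_zero hs)
  rw [key]
  ring

/-- Orthogonality of the discrete sine modes; the vanishing term `i = 0` is included. -/
lemma sum_sin_mul_sin (N : ℕ) (p q : ℤ) (hp : 0 < p) (hpN : p < N) (hq : 0 < q) (hqN : q < N) :
    ∑ i ∈ Finset.range N, Real.sin (i * (p * Real.pi / N)) * Real.sin (i * (q * Real.pi / N)) =
      if p = q then (N : ℝ) / 2 else 0 := by
  have e : ∀ i : ℕ, Real.sin (i * (p * Real.pi / N)) * Real.sin (i * (q * Real.pi / N)) =
      (Real.cos (i * ((p - q : ℤ) * Real.pi / N)) - Real.cos (i * ((p + q : ℤ) * Real.pi / N))) / 2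
      := by
    intro i
    have := Real.two_mul_sin_mul_sin (i * (p * Real.pi / N)) (i * (q * Real.pi / N))
    have e1 : (i : ℝ) * ((p - q : ℤ) * Real.pi / N) =
      i * (p * Real.pi / N) - i * (q * Real.pi / N) := by push_cast; ring
    have e2 : (i : ℝ) * ((p + q : ℤ) * Real.pi / N) =
      i * (p * Real.pi / N) + i * (q * Real.pi / N) := by push_cast; ring
    rw [e1, e2]
    linarith
  simp_rw [e]
  rw [← Finset.sum_div, Finset.sum_sub_distrib,
    sum_cos_int N (p + q) (by omega) (by omega) (by omega)]
  -- `p + q` and `p - q` have the same parity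
  have par : ((-1 : ℝ)) ^ (p + q) = (-1) ^ (p - q) := by
    rw [show p + q = (p - q) + (q + q) by ring, zpow_add₀ (by norm_num),
      Even.neg_one_zpow ⟨q, rfl⟩, mul_one]
  rw [par]
  split_ifs with hpq
  · subst hpq
    simp
  · rw [sum_cos_int N (p - q) (by omega) (by omega) (by omega)]
    ring

/-- The Dirichlet Laplacian acts on `f : ℕ → ℝ`, sampled at `1, …, n` and vanishing at `0` and
`n + 1`, as the negated second difference. -/
lemma sum_dirichlet_mul {n : ℕ} (f : ℕ → ℝ) (f0 : f 0 = 0) (fn : f (n + 1) = 0) (x : Fin n) :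
    ∑ y : Fin n, (if x = y then (2 : ℝ) else
        if ((x : ℤ) - (y : ℤ)).natAbs = 1 then -1 else 0) * f (y + 1) =
      2 * f (x + 1) - f x - f (x + 2) := by
  have hx := x.isLt
  have e : ∀ y : Fin n, (if x = y then (2 : ℝ) else
        if ((x : ℤ) - (y : ℤ)).natAbs = 1 then -1 else 0) * f (y + 1) =
      (fun y : ℕ => (if y = x then 2 * f (y + 1) else 0)
        - (if y + 1 = x then f (y + 1) else 0) - (if y = x + 1 then f (y + 1) else 0)) y := by
    intro y
    simp only [Fin.ext_iff]
    split_ifs <;> first | omega | ring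
  rw [Finset.sum_congr rfl fun y _ => e y, Fin.sum_univ_eq_sum_range
    (fun y : ℕ => (if y = x then 2 * f (y + 1) else 0)
        - (if y + 1 = x then f (y + 1) else 0) - (if y = x + 1 then f (y + 1) else 0)) n,
    Finset.sum_sub_distrib, Finset.sum_sub_distrib]
  have s1 : ∑ y ∈ Finset.range n, (if y = (x : ℕ) then 2 * f (y + 1) else 0) = 2 * f (x + 1) := by
    simp
  have s2 : ∑ y ∈ Finset.range n, (if y + 1 = (x : ℕ) then f (y + 1) else 0) = f x := by
    rcases Nat.eq_zero_or_pos (x : ℕ) with h | h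
    · simp [h, f0]
    · obtain ⟨z, hz⟩ : ∃ z, (x : ℕ) = z + 1 := ⟨x - 1, by omega⟩
      have : z < n := by omega
      simp [hz, this]
  have s3 : ∑ y ∈ Finset.range n, (if y = (x : ℕ) + 1 then f (y + 1) else 0) = f (x + 2) := by
    rw [Finset.sum_ite_eq']
    split_ifs with h
    · rfl
    · rw [Finset.mem_range] at h
      rw [show (x : ℕ) + 2 = n + 1 by omega, fn]
  rw [s1, s2, s3]

lemma laplace_sin (a θ : ℝ) :
    2 * Real.sin ((a + 1) * θ) - Real.sin (a * θ) - Real.sin ((a + 2) * θ) =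
      Real.sin ((a + 1) * θ) * (4 * Real.sin (θ / 2) ^ 2) := by
  have e1 : a * θ = (a + 1) * θ - θ := by ring
  have e2 : (a + 2) * θ = (a + 1) * θ + θ := by ring
  have e3 : Real.sin (θ / 2) ^ 2 = 1 / 2 - Real.cos θ / 2 := by
    rw [Real.sin_sq_eq_half_sub]
    congr 3
    ring
  rw [e1, e2, e3, Real.sin_add, Real.sin_sub]
  ring

/-- Spectral decomposition of the discrete Dirichlet Laplacian: for `n ≥ 1`, let
`h ∈ ℝ^{n×n}` have entries `2` on the diagonal, `−1` on the first off-diagonals and `0`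
otherwise, and let `O` have entries `O_{jk} = √(2/(n+1))·sin(jkπ/(n+1))` (indices
`1, …, n`).  Then `O` is orthogonal, `Oᵀ h O = D` with `D_{jj} = 4 sin²(jπ/(2(n+1)))`;
in particular the spectrum of `h` is `{4 sin²(jπ/(2(n+1))) : j = 1, …, n}` and
`0 < h < 4·I` in the Loewner order. -/
theorem dirichlet_laplacian_spectral_decomposition {n : ℕ} (hn : 1 ≤ n)
    (h O : Matrix (Fin n) (Fin n) ℝ)
    (hh : ∀ x y : Fin n, h x y =
      if x = y then 2 else if ((x : ℤ) - (y : ℤ)).natAbs = 1 then -1 else 0)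
    (hO : ∀ j k : Fin n, O j k =
      Real.sqrt (2 / (n + 1)) *
        Real.sin (((j : ℕ) + 1) * ((k : ℕ) + 1) * Real.pi / (n + 1))) :
    (Oᵀ * O = 1 ∧ O * Oᵀ = 1) ∧
    Oᵀ * h * O =
      Matrix.diagonal (fun j : Fin n =>
        4 * Real.sin (((j : ℕ) + 1) * Real.pi / (2 * (n + 1))) ^ 2) ∧
    spectrum ℝ h =
      Set.range (fun j : Fin n =>
        4 * Real.sin (((j : ℕ) + 1) * Real.pi / (2 * (n + 1))) ^ 2) ∧
    h.PosDef ∧ ((4 : ℝ) • (1 : Matrix (Fin n) (Fin n) ℝ) - h).PosDef := by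
  have hN : (0 : ℝ) < (n : ℝ) + 1 := by positivity
  have hsymm : Oᵀ = O := by
    ext j k
    rw [transpose_apply, hO, hO, mul_comm ((k : ℕ) + 1 : ℝ)]
  have hOO : O * O = 1 := by
    ext j k
    have hj := j.isLt
    have hk := k.isLt
    have S := sum_sin_mul_sin (n + 1) ((j : ℕ) + 1 : ℤ) ((k : ℕ) + 1 : ℤ)
      (by omega) (by omega) (by omega) (by omega)
    rw [Finset.sum_range_succ', ← Fin.sum_univ_eq_sum_range (fun i : ℕ =>
      Real.sin ((i + 1 : ℕ) * (((j : ℕ) + 1 : ℤ) * Real.pi / (n + 1 : ℕ))) *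
        Real.sin ((i + 1 : ℕ) * (((k : ℕ) + 1 : ℤ) * Real.pi / (n + 1 : ℕ)))) n] at S
    have sq := Real.mul_self_sqrt (show (0 : ℝ) ≤ 2 / (n + 1) by positivity)
    have e : ∀ i : Fin n, O j i * O i k = 2 / (n + 1) *
        (Real.sin ((i + 1 : ℕ) * (((j : ℕ) + 1 : ℤ) * Real.pi / (n + 1 : ℕ))) *
        Real.sin ((i + 1 : ℕ) * (((k : ℕ) + 1 : ℤ) * Real.pi / (n + 1 : ℕ)))) := by
      intro i
      rw [hO, hO]
      have e1 : (((j : ℕ) + 1) * ((i : ℕ) + 1) * Real.pi / (n + 1) : ℝ) =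
        (i + 1 : ℕ) * (((j : ℕ) + 1 : ℤ) * Real.pi / (n + 1 : ℕ)) := by push_cast; ring
      have e2 : (((i : ℕ) + 1) * ((k : ℕ) + 1) * Real.pi / (n + 1) : ℝ) =
        (i + 1 : ℕ) * (((k : ℕ) + 1 : ℤ) * Real.pi / (n + 1 : ℕ)) := by push_cast; ring
      rw [e1, e2, mul_mul_mul_comm, sq]
    rw [mul_apply, Finset.sum_congr rfl fun i _ => e i, ← Finset.mul_sum]
    simp only [Nat.cast_zero, zero_mul, Real.sin_zero, add_zero] at S
    rw [S, one_apply]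
    by_cases hjk : j = k
    · subst hjk
      simp only [if_true]
      push_cast
      field_simp
    · have : ¬ (((j : ℕ) + 1 : ℤ) = (k : ℕ) + 1) := by
        rw [Fin.ext_iff] at hjk
        omega
      rw [if_neg this, if_neg hjk, mul_zero]
  set d : Fin n → ℝ := fun j : Fin n =>
        4 * Real.sin (((j : ℕ) + 1) * Real.pi / (2 * (n + 1))) ^ 2 with hd
  have hhO : h * O = O * diagonal d := by
    ext x k
    rw [mul_diagonal, mul_apply]
    set θ : ℝ := ((k : ℕ) + 1) * Real.pi / (n + 1) with hθ
    have L := sum_dirichlet_mul (n := n) (fun y => Real.sqrt (2 / (n + 1)) * Real.sin (y * θ))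
      (by simp) (by
        have : ((n + 1 : ℕ) : ℝ) * θ = ((k : ℕ) + 1 : ℕ) * Real.pi := by
          rw [hθ]
          push_cast
          field_simp
        simp only [this, Real.sin_nat_mul_pi, mul_zero]) x
    have e : ∀ y : Fin n, O y k = Real.sqrt (2 / (n + 1)) * Real.sin (((y : ℕ) + 1 : ℕ) * θ) := by
      intro y
      rw [hO, hθ]
      congr 2
      push_cast
      ring
    simp_rw [hh, e]
    rw [L]
    have T := laplace_sin (x : ℕ) θ
    have e4 : θ / 2 = ((k : ℕ) + 1) * Real.pi / (2 * (n + 1)) := by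
      rw [hθ]
      field_simp
    rw [e4] at T
    simp only [hd]
    push_cast
    linear_combination Real.sqrt (2 / (n + 1)) * T
  have hdiag : h = O * diagonal d * O := by
    rw [← hhO, Matrix.mul_assoc, hOO, Matrix.mul_one]
  have hOH : Oᴴ = O := by rw [conjTranspose_eq_transpose_of_trivial, hsymm]
  have hinj : Function.Injective O.vecMul := by
    rw [vecMul_injective_iff_isUnit]
    exact IsUnit.of_mul_eq_one _ hOO
  have hangle : ∀ j : Fin n, 0 < ((j : ℕ) + 1) * Real.pi / (2 * ((n : ℝ) + 1)) ∧
      ((j : ℕ) + 1) * Real.pi / (2 * ((n : ℝ) + 1)) < Real.pi / 2 := by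
    intro j
    have hj : ((j : ℕ) : ℝ) < n := by exact_mod_cast j.isLt
    have := Real.pi_pos
    refine ⟨by positivity, ?_⟩
    rw [div_lt_div_iff₀ (by positivity) (by positivity)]
    nlinarith
  have hd0 : ∀ j, 0 < d j := by
    intro j
    obtain ⟨h1, h2⟩ := hangle j
    have := Real.sin_pos_of_pos_of_lt_pi h1 (by linarith)
    simp only [hd]
    positivity
  have hd4 : ∀ j, 0 < 4 - d j := by
    intro j
    obtain ⟨h1, h2⟩ := hangle j
    have hc := Real.cos_pos_of_mem_Ioo ⟨by linarith, h2⟩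
    have hsc := Real.sin_sq_add_cos_sq (((j : ℕ) + 1) * Real.pi / (2 * ((n : ℝ) + 1)))
    simp only [hd]
    nlinarith
  refine ⟨by rw [hsymm]; exact ⟨hOO, hOO⟩, ?_, ?_, ?_, ?_⟩
  · rw [hsymm, Matrix.mul_assoc, hhO, ← Matrix.mul_assoc, hOO, Matrix.one_mul]
  · rw [hdiag, ← spectrum_diagonal d]
    exact spectrum.units_conjugate (u := ⟨O, O, hOO, hOO⟩)
  · have := (PosDef.diagonal hd0).mul_mul_conjTranspose_same hinj
    rwa [hOH, ← hdiag] at this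
  · have := (PosDef.diagonal hd4).mul_mul_conjTranspose_same hinj
    have e : (4 : ℝ) • (1 : Matrix (Fin n) (Fin n) ℝ) - h
        = O * diagonal (fun j => 4 - d j) * O := by
      have e5 : diagonal (fun j => 4 - d j)
          = (4 : ℝ) • (1 : Matrix (Fin n) (Fin n) ℝ) - diagonal d := by
        rw [smul_one_eq_diagonal, diagonal_sub]
      rw [e5, Matrix.mul_sub, Matrix.sub_mul, ← hdiag, Matrix.mul_smul, Matrix.smul_mul,
        Matrix.mul_one, hOO]
    rwa [hOH, ← e] at this
end

section
/- For all integers j, k ≥ 1, one has 2^{3/2} ∫₀¹ sin(πx/2)^{1/2} · sin(jπx) · sin(kπx) dx = (1/(2√(2π))) · ( Γ(j+k−1/4)/Γ(j+k+5/4) − Γ(|j−k|−1/4)/Γ(|j−k|+5/4) ), where Γ denotes the Gamma function (note Γ(−1/4) is a well-defined negative real, occurring when j = k). -/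
/-!
By the product-to-sum formula, the integral is half the difference of the cosine moments `I m` at
`m = |j - k|` and `m = j + k`, where `I m = ∫₀¹ √(sin (πx/2)) cos (mπx) dx`. So it suffices to show
`I m = -(1 / (4√π)) Γ(m - 1/4) / Γ(m + 5/4)` for natural `m`, which goes by induction on `m`.

* `m = 0`: substituting `u = sin² (πx/2)` in the Beta integral `B(3/4, 1/2)` gives `π * I 0`
  (`cosMoment_zero`).
* Step: `sin^{3/2}(πx/2) cos ((2m+1)πx/2)` vanishes at both endpoints and has derivative
  `(π/2) √(sin (πx/2)) ((m + 5/4) cos ((m+1)πx) - (m - 1/4) cos (mπx))`, so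
  `(m + 5/4) I (m+1) = (m - 1/4) I m` (`cosMoment_succ`). The Gamma quotient satisfies the same
  recurrence.
-/

open MeasureTheory in
/-- The Beta function as a real integral. -/
lemma real_beta_integral (a b : ℝ) (ha : 0 < a) (hb : 0 < b) :
    ∫ u in Set.Ioo (0 : ℝ) 1, u ^ (a - 1) * (1 - u) ^ (b - 1) =
      Real.Gamma a * Real.Gamma b / Real.Gamma (a + b) := by
  have h := ProbabilityTheory.beta_eq_betaIntegralReal a b ha hb
  rw [ProbabilityTheory.beta] at h
  rw [h, Complex.betaIntegral, intervalIntegral.integral_of_le zero_le_one,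
    integral_Ioc_eq_integral_Ioo]
  rw [← Complex.ofReal_re (∫ u in Set.Ioo (0 : ℝ) 1, u ^ (a - 1) * (1 - u) ^ (b - 1)),
    ← integral_complex_ofReal]
  congr 1
  refine setIntegral_congr_fun measurableSet_Ioo fun u hu => ?_
  have h1 : 0 ≤ u := hu.1.le
  have h2 : 0 ≤ 1 - u := by linarith [hu.2]
  rw [Complex.ofReal_mul, Complex.ofReal_cpow h1, Complex.ofReal_cpow h2]
  push_cast
  rfl

/-- The cosine moment `∫₀¹ √(sin (πx/2)) cos (mπx) dx`. -/
noncomputable def cosMoment (m : ℕ) : ℝ :=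
  ∫ x in (0 : ℝ)..1, Real.sqrt (Real.sin (Real.pi * x / 2)) * Real.cos (m * Real.pi * x)

lemma hasDerivAt_sin_half_pi (x : ℝ) :
    HasDerivAt (fun y : ℝ => Real.sin (Real.pi * y / 2))
      (Real.cos (Real.pi * x / 2) * (Real.pi / 2)) x := by
  have h : HasDerivAt (fun y : ℝ => Real.pi * y / 2) (Real.pi / 2) x := by
    simpa using ((hasDerivAt_id x).const_mul Real.pi).div_const 2
  exact h.sin

lemma sin_half_pi_pos {x : ℝ} (hx : x ∈ Set.Ioo (0 : ℝ) 1) : 0 < Real.sin (Real.pi * x / 2) := by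
  apply Real.sin_pos_of_pos_of_lt_pi
  · have := mul_pos Real.pi_pos hx.1
    linarith
  · nlinarith [Real.pi_pos, hx.1, hx.2]

lemma cos_half_pi_pos {x : ℝ} (hx : x ∈ Set.Ioo (0 : ℝ) 1) : 0 < Real.cos (Real.pi * x / 2) := by
  apply Real.cos_pos_of_mem_Ioo
  constructor <;> nlinarith [Real.pi_pos, hx.1, hx.2]

lemma strictMonoOn_sin_sq :
    StrictMonoOn (fun x : ℝ => Real.sin (Real.pi * x / 2) ^ 2) (Set.Icc 0 1) := by
  intro x hx y hy hxy
  have hpi := Real.pi_pos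
  have hlt : Real.sin (Real.pi * x / 2) < Real.sin (Real.pi * y / 2) := by
    apply Real.strictMonoOn_sin
    · constructor <;> nlinarith [hx.1, hx.2]
    · constructor <;> nlinarith [hy.1, hy.2]
    · nlinarith
  have h0 : 0 ≤ Real.sin (Real.pi * x / 2) := by
    apply Real.sin_nonneg_of_nonneg_of_le_pi <;> nlinarith [hx.1, hx.2]
  exact pow_lt_pow_left₀ hlt h0 two_ne_zero

lemma image_sin_sq :
    (fun x : ℝ => Real.sin (Real.pi * x / 2) ^ 2) '' Set.Ioo 0 1 = Set.Ioo 0 1 := by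
  have e0 : Real.sin (Real.pi * 0 / 2) ^ 2 = 0 := by simp
  have e1 : Real.sin (Real.pi * 1 / 2) ^ 2 = 1 := by simp
  apply Set.Subset.antisymm
  · rintro _ ⟨x, hx, rfl⟩
    have hs := sin_half_pi_pos hx
    have hc := cos_half_pi_pos hx
    have := Real.sin_sq_add_cos_sq (Real.pi * x / 2)
    exact ⟨by positivity, by dsimp only; nlinarith⟩
  · have h := intermediate_value_Ioo (zero_le_one' ℝ)
      (f := fun x : ℝ => Real.sin (Real.pi * x / 2) ^ 2) (by fun_prop)
    simpa only [e0, e1] using h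

open MeasureTheory in
lemma cosMoment_zero :
    cosMoment 0 = Real.Gamma (3 / 4) / (Real.sqrt Real.pi * Real.Gamma (5 / 4)) := by
  have hB := real_beta_integral (3 / 4) (1 / 2) (by norm_num) (by norm_num)
  rw [Real.Gamma_one_half_eq] at hB
  have hd : ∀ x ∈ Set.Ioo (0 : ℝ) 1,
      HasDerivWithinAt (fun x : ℝ => Real.sin (Real.pi * x / 2) ^ 2)
        (Real.pi * Real.sin (Real.pi * x / 2) * Real.cos (Real.pi * x / 2)) (Set.Ioo 0 1) x := by
    intro x _
    have h := ((hasDerivAt_sin_half_pi x).pow 2).hasDerivWithinAt (s := Set.Ioo (0 : ℝ) 1)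
    refine h.congr_deriv ?_
    norm_num
    ring
  have hsub := integral_image_eq_integral_abs_deriv_smul measurableSet_Ioo hd
    (strictMonoOn_sin_sq.injOn.mono Set.Ioo_subset_Icc_self)
    (fun u : ℝ => u ^ ((3 / 4 : ℝ) - 1) * (1 - u) ^ ((1 / 2 : ℝ) - 1))
  rw [image_sin_sq, hB] at hsub
  have hcongr : ∫ x in Set.Ioo (0 : ℝ) 1,
      |Real.pi * Real.sin (Real.pi * x / 2) * Real.cos (Real.pi * x / 2)| •
        ((Real.sin (Real.pi * x / 2) ^ 2) ^ ((3 / 4 : ℝ) - 1) *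
          (1 - Real.sin (Real.pi * x / 2) ^ 2) ^ ((1 / 2 : ℝ) - 1)) =
      ∫ x in Set.Ioo (0 : ℝ) 1, Real.pi * Real.sqrt (Real.sin (Real.pi * x / 2)) := by
    refine setIntegral_congr_fun measurableSet_Ioo fun x hx => ?_
    have hs := sin_half_pi_pos hx
    have hc := cos_half_pi_pos hx
    simp only [smul_eq_mul]
    rw [abs_of_pos (by positivity), ← Real.cos_sq', ← Real.rpow_natCast, ← Real.rpow_natCast,
      ← Real.rpow_mul hs.le, ← Real.rpow_mul hc.le]
    generalize Real.sin (Real.pi * x / 2) = s at *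
    generalize Real.cos (Real.pi * x / 2) = c at *
    have h1 : c ^ (((2 : ℕ) : ℝ) * ((1 / 2 : ℝ) - 1)) = c⁻¹ := by
      rw [← Real.rpow_neg_one]; norm_num
    have h2 : s * s ^ (((2 : ℕ) : ℝ) * ((3 / 4 : ℝ) - 1)) = Real.sqrt s := by
      rw [Real.sqrt_eq_rpow]
      nth_rw 1 [← Real.rpow_one s]
      rw [← Real.rpow_add hs]
      norm_num
    rw [h1, ← h2]
    field_simp
  rw [hcongr, integral_const_mul, ← integral_Ioc_eq_integral_Ioo,
    ← intervalIntegral.integral_of_le zero_le_one] at hsub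
  have hI : cosMoment 0 = ∫ x in (0 : ℝ)..1, Real.sqrt (Real.sin (Real.pi * x / 2)) := by
    simp [cosMoment]
  rw [← hI] at hsub
  have hG : Real.Gamma (5 / 4) ≠ 0 := (Real.Gamma_pos_of_pos (by norm_num)).ne'
  have hsq : Real.sqrt Real.pi ^ 2 = Real.pi := Real.sq_sqrt Real.pi_pos.le
  have hsp : 0 < Real.sqrt Real.pi := Real.sqrt_pos.mpr Real.pi_pos
  norm_num at hsub
  rw [← hsq, div_eq_iff hG] at hsub
  rw [Real.sqrt_sq hsp.le] at hsub
  rw [eq_div_iff (by positivity)]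
  apply mul_left_cancel₀ hsp.ne'
  linarith

lemma continuous_cosMoment_integrand (m : ℕ) : Continuous fun x : ℝ =>
    Real.sqrt (Real.sin (Real.pi * x / 2)) * Real.cos (m * Real.pi * x) := by
  fun_prop

lemma cosMoment_succ (m : ℕ) :
    ((m : ℝ) + 5 / 4) * cosMoment (m + 1) = ((m : ℝ) - 1 / 4) * cosMoment m := by
  have hint := fun n : ℕ =>
    (continuous_cosMoment_integrand n).intervalIntegrable (μ := MeasureTheory.volume) 0 1
  have hF := intervalIntegral.integral_eq_sub_of_hasDerivAt_of_le (a := 0) (b := 1)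
    (f := fun x : ℝ => Real.sin (Real.pi * x / 2) * Real.sqrt (Real.sin (Real.pi * x / 2)) *
      Real.cos ((2 * m + 1) * (Real.pi * x / 2)))
    (f' := fun x : ℝ => Real.pi / 2 * (((m : ℝ) + 5 / 4) *
      (Real.sqrt (Real.sin (Real.pi * x / 2)) * Real.cos ((m + 1 : ℕ) * Real.pi * x)) -
      ((m : ℝ) - 1 / 4) *
      (Real.sqrt (Real.sin (Real.pi * x / 2)) * Real.cos (m * Real.pi * x))))
    zero_le_one (by fun_prop) ?_
    ((((hint (m + 1)).const_mul _).sub ((hint m).const_mul _)).const_mul _)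
  · rw [intervalIntegral.integral_const_mul, intervalIntegral.integral_sub
      ((hint (m + 1)).const_mul _) ((hint m).const_mul _), intervalIntegral.integral_const_mul,
      intervalIntegral.integral_const_mul] at hF
    have hcos : Real.cos ((2 * m + 1) * (Real.pi / 2)) = 0 :=
      Real.cos_eq_zero_iff.mpr ⟨m, by push_cast; ring⟩
    simp only [mul_one, mul_zero, zero_div, Real.sin_zero, zero_mul, hcos, sub_zero] at hF
    have := (mul_eq_zero.mp hF).resolve_left (by positivity)
    simp only [cosMoment]
    linarith
  · intro x hx
    have hs := sin_half_pi_pos hx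
    have h1 := hasDerivAt_sin_half_pi x
    have h2 := h1.sqrt hs.ne'
    have h3 : HasDerivAt (fun y : ℝ => Real.cos ((2 * m + 1) * (Real.pi * y / 2)))
        (-Real.sin ((2 * m + 1) * (Real.pi * x / 2)) * ((2 * m + 1) * (Real.pi / 2))) x := by
      have h : HasDerivAt (fun y : ℝ => (2 * (m : ℝ) + 1) * (Real.pi * y / 2))
          ((2 * m + 1) * (Real.pi / 2)) x := by
        simpa using (((hasDerivAt_id x).const_mul Real.pi).div_const 2).const_mul (2 * (m : ℝ) + 1)
      exact h.cos
    refine ((h1.mul h2).mul h3).congr_deriv ?_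
    -- Both frequencies are `(2m+1)πx/2 ± πx/2`.
    have e1 : ((m + 1 : ℕ) : ℝ) * Real.pi * x =
        (2 * m + 1) * (Real.pi * x / 2) + Real.pi * x / 2 := by push_cast; ring
    have e2 : (m : ℝ) * Real.pi * x =
        (2 * m + 1) * (Real.pi * x / 2) - Real.pi * x / 2 := by ring
    rw [e1, e2, Real.cos_add, Real.cos_sub]
    generalize Real.cos ((2 * m + 1) * (Real.pi * x / 2)) = C
    generalize Real.sin ((2 * m + 1) * (Real.pi * x / 2)) = S
    simp only [Pi.mul_apply]
    generalize Real.cos (Real.pi * x / 2) = c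
    generalize Real.sin (Real.pi * x / 2) = s at *
    have hr : 0 < Real.sqrt s := Real.sqrt_pos.mpr hs
    have hrs : s = Real.sqrt s ^ 2 := (Real.sq_sqrt hs.le).symm
    generalize Real.sqrt s = r at *
    subst hrs
    field_simp
    ring

lemma cosMoment_eq (m : ℕ) :
    cosMoment m =
      -(1 / (4 * Real.sqrt Real.pi)) * (Real.Gamma (m - 1 / 4) / Real.Gamma (m + 5 / 4)) := by
  induction m with
  | zero =>
    -- `Γ(3/4) = (-1/4) Γ(-1/4)`
    have h := Real.Gamma_add_one (s := -1 / 4) (by norm_num)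
    norm_num at h
    rw [cosMoment_zero, h]
    norm_num
    ring
  | succ m ih =>
    have hm : (m : ℝ) - 1 / 4 ≠ 0 := by
      intro h
      have h4 : ((4 * m : ℕ) : ℝ) = (1 : ℕ) := by push_cast; linarith
      have := Nat.cast_injective h4
      omega
    have hp : (0 : ℝ) < (m : ℝ) + 5 / 4 := by positivity
    have e1 : ((m + 1 : ℕ) : ℝ) - 1 / 4 = ((m : ℝ) - 1 / 4) + 1 := by push_cast; ring
    have e2 : ((m + 1 : ℕ) : ℝ) + 5 / 4 = ((m : ℝ) + 5 / 4) + 1 := by push_cast; ring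
    rw [e1, e2, Real.Gamma_add_one hm, Real.Gamma_add_one hp.ne']
    have hrec := cosMoment_succ m
    rw [ih] at hrec
    apply mul_left_cancel₀ hp.ne'
    rw [hrec]
    have hG := (Real.Gamma_pos_of_pos hp).ne'
    field_simp

/-- For all integers `j, k ≥ 1`,
`2^{3/2} ∫₀¹ sin(πx/2)^{1/2} sin(jπx) sin(kπx) dx
  = (1/(2√(2π))) (Γ(j+k−1/4)/Γ(j+k+5/4) − Γ(|j−k|−1/4)/Γ(|j−k|+5/4))`. -/
theorem matrix_element_quarter_power (j k : ℕ) (hj : 1 ≤ j) (hk : 1 ≤ k) :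
    (2 : ℝ) ^ ((3 : ℝ) / 2) *
      ∫ x in (0 : ℝ)..1,
        Real.sqrt (Real.sin (Real.pi * x / 2)) *
          Real.sin (j * Real.pi * x) * Real.sin (k * Real.pi * x)
    = 1 / (2 * Real.sqrt (2 * Real.pi)) *
      (Real.Gamma ((j : ℝ) + k - 1 / 4) / Real.Gamma ((j : ℝ) + k + 5 / 4)
        - Real.Gamma (|(j : ℝ) - k| - 1 / 4) / Real.Gamma (|(j : ℝ) - k| + 5 / 4)) := by
  obtain ⟨d, hd⟩ : ∃ d : ℕ, (d : ℝ) = |(j : ℝ) - k| :=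
    ⟨((j : ℤ) - k).natAbs, by rw [Nat.cast_natAbs]; push_cast; rfl⟩
  have hint := fun n : ℕ =>
    (continuous_cosMoment_integrand n).intervalIntegrable (μ := MeasureTheory.volume) 0 1
  have hI : ∫ x in (0 : ℝ)..1, Real.sqrt (Real.sin (Real.pi * x / 2)) *
      Real.sin (j * Real.pi * x) * Real.sin (k * Real.pi * x) =
      1 / 2 * (cosMoment d - cosMoment (j + k)) := by
    rw [cosMoment, cosMoment, ← intervalIntegral.integral_sub (hint d) (hint (j + k)),
      ← intervalIntegral.integral_const_mul]
    congr 1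
    funext x
    have hcd : Real.cos (d * Real.pi * x) =
        Real.cos (j * Real.pi * x - k * Real.pi * x) := by
      rw [hd]
      rcases abs_choice ((j : ℝ) - k) with h | h <;> rw [h]
      · congr 1; ring
      · rw [← Real.cos_neg]; congr 1; ring
    have hcs : Real.cos ((j + k : ℕ) * Real.pi * x) =
        Real.cos (j * Real.pi * x + k * Real.pi * x) := by
      congr 1; push_cast; ring
    rw [hcd, hcs, Real.cos_sub, Real.cos_add]
    ring
  have h2 : (2 : ℝ) ^ ((3 : ℝ) / 2) = 2 * Real.sqrt 2 := by
    rw [show (3 : ℝ) / 2 = 1 + 1 / 2 by norm_num, Real.rpow_add two_pos, Real.rpow_one,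
      Real.sqrt_eq_rpow]
  rw [hI, cosMoment_eq, cosMoment_eq, h2, ← hd, Real.sqrt_mul zero_le_two]
  push_cast
  have hs2 : Real.sqrt 2 ^ 2 = 2 := Real.sq_sqrt zero_le_two
  have hsp : 0 < Real.sqrt Real.pi := Real.sqrt_pos.mpr Real.pi_pos
  have hs2p : 0 < Real.sqrt 2 := Real.sqrt_pos.mpr two_pos
  have hc : 1 / (2 * (Real.sqrt 2 * Real.sqrt Real.pi)) =
      Real.sqrt 2 * (1 / (4 * Real.sqrt Real.pi)) := by
    field_simp
    linarith
  rw [hc]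
  ring
end

section
/- For all integers j, k ≥ 1, one has ∫₀¹ (sin(jπx)·sin(kπx))/sin(πx/2) dx = (1/π) · Σ_{l=|j−k|+1}^{j+k} 2/(2l−1) = (1/π)·( ψ(j+k+1/2) − ψ(|j−k|+1/2) ), where ψ = Γ'/Γ is the digamma function. (The integrand extends continuously to x = 0.) -/
/-!
Write `d = |j - k|` and `n = j + k`. Since `2 sin(jθ) sin(kθ) = cos(dθ) - cos(nθ)` with `θ = πx`, and
`cos((l-1)θ) - cos(lθ) = 2 sin(θ/2) sin((2l-1)θ/2)`, telescoping over `d < l ≤ n` shows that the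
integrand is the trigonometric polynomial `∑ sin((2l-1)πx/2)`. Each term integrates over `[0,1]` to
`2 / ((2l-1)π)`, because `cos((2l-1)π/2) = 0`. The digamma form is the same telescoping for
`ψ(x+1) = ψ(x) + 1/x` along the points `l - 1/2`.
-/

theorem cos_sub_cos_eq_sum (t : ℝ) (d n : ℕ) (h : d ≤ n) :
    Real.cos (d * t) - Real.cos (n * t)
      = 2 * Real.sin (t / 2) * ∑ l ∈ Finset.Icc (d + 1) n, Real.sin ((2 * (l : ℝ) - 1) * (t / 2)) := by
  induction n, h using Nat.le_induction with
  | base => simp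
  | succ n hn ih =>
    rw [Finset.sum_Icc_succ_top (by omega), mul_add, ← ih]
    have h1 := Real.cos_sub_cos (n * t) ((n + 1 : ℕ) * t)
    have e1 : ((n : ℝ) * t + (n + 1 : ℕ) * t) / 2 = (2 * ((n + 1 : ℕ) : ℝ) - 1) * (t / 2) := by
      push_cast; ring
    have e2 : ((n : ℝ) * t - (n + 1 : ℕ) * t) / 2 = -(t / 2) := by
      push_cast; ring
    rw [e1, e2, Real.sin_neg] at h1
    linarith

theorem two_mul_sin_mul_sin_eq (j k d : ℕ) (hd : d = ((j : ℤ) - (k : ℤ)).natAbs) (t : ℝ) :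
    2 * (Real.sin (j * t) * Real.sin (k * t))
      = Real.cos (d * t) - Real.cos ((j + k : ℕ) * t) := by
  have hc : Real.cos (d * t) = Real.cos (j * t - k * t) := by
    rcases le_total j k with h | h
    · have : (d : ℝ) = k - j := by
        rw [← Nat.cast_sub h]; congr 1; omega
      rw [this, ← Real.cos_neg]; congr 1; ring
    · have : (d : ℝ) = j - k := by
        rw [← Nat.cast_sub h]; congr 1; omega
      rw [this]; congr 1; ring
  rw [hc, Real.cos_sub]
  push_cast
  rw [add_mul, Real.cos_add]
  ring

/-- On all of `[0,1]` the quotient is a sum of sines; at `x = 0` both sides vanish, the left one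
because of the convention `0 / 0 = 0`. -/
theorem integrand_eq_sum (j k d : ℕ) (hd : d = ((j : ℤ) - (k : ℤ)).natAbs)
    (x : ℝ) (hx : x ∈ Set.Icc (0 : ℝ) 1) :
    Real.sin (j * Real.pi * x) * Real.sin (k * Real.pi * x) / Real.sin (Real.pi * x / 2)
      = ∑ l ∈ Finset.Icc (d + 1) (j + k), Real.sin ((2 * (l : ℝ) - 1) * (Real.pi / 2) * x) := by
  rcases hx.1.eq_or_lt with rfl | h0
  · simp
  · have hs : 0 < Real.sin (Real.pi * x / 2) := by
      apply Real.sin_pos_of_pos_of_lt_pi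
      · positivity
      · nlinarith [Real.pi_pos, hx.2]
    rw [div_eq_iff hs.ne']
    have h1 := two_mul_sin_mul_sin_eq j k d hd (Real.pi * x)
    rw [cos_sub_cos_eq_sum (Real.pi * x) d (j + k) (by omega)] at h1
    have e : ∀ l : ℕ, (2 * (l : ℝ) - 1) * (Real.pi / 2) * x
        = (2 * (l : ℝ) - 1) * (Real.pi * x / 2) := fun l => by ring
    simp only [e, mul_assoc (_ : ℝ) Real.pi x]
    linarith

theorem integral_sin_half_odd (l : ℕ) (hl : 1 ≤ l) :
    ∫ x in (0 : ℝ)..1, Real.sin ((2 * (l : ℝ) - 1) * (Real.pi / 2) * x)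
      = 1 / Real.pi * (2 / (2 * (l : ℝ) - 1)) := by
  have hl' : (1 : ℝ) ≤ l := by exact_mod_cast hl
  have h1 : (2 * (l : ℝ) - 1) ≠ 0 := by linarith
  have hc : Real.cos ((2 * (l : ℝ) - 1) * (Real.pi / 2)) = 0 := by
    rw [Real.cos_eq_zero_iff]
    exact ⟨(l : ℤ) - 1, by push_cast; ring⟩
  have hp := Real.pi_ne_zero
  rw [intervalIntegral.integral_comp_mul_left (fun y => Real.sin y) (by positivity), integral_sin]
  simp only [mul_zero, mul_one, Real.cos_zero, hc, smul_eq_mul]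
  field_simp
  ring

theorem Real.deriv_Gamma_div_Gamma_add_one (x : ℝ) (hx : 0 < x) :
    deriv Real.Gamma (x + 1) / Real.Gamma (x + 1) = deriv Real.Gamma x / Real.Gamma x + 1 / x := by
  have hdiff : ∀ y : ℝ, 0 < y → DifferentiableAt ℝ Real.Gamma y := fun y hy =>
    Real.differentiableAt_Gamma fun m => by
      have : (0 : ℝ) ≤ m := m.cast_nonneg
      linarith
  have hG : Real.Gamma x ≠ 0 := (Real.Gamma_pos_of_pos hx).ne'
  have hd : deriv Real.Gamma (x + 1) = Real.Gamma x + x * deriv Real.Gamma x := by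
    rw [← deriv_comp_add_const]
    -- the functional equation holds near `x`, so its two sides have the same derivative there
    have he : (fun y => Real.Gamma (y + 1)) =ᶠ[nhds x] fun y => y * Real.Gamma y := by
      filter_upwards [lt_mem_nhds hx] with y hy using Real.Gamma_add_one hy.ne'
    rw [he.deriv_eq]
    have hm : HasDerivAt (fun y => y * Real.Gamma y)
        (1 * Real.Gamma x + x * deriv Real.Gamma x) x :=
      (hasDerivAt_id x).mul (hdiff x hx).hasDerivAt
    rw [hm.deriv, one_mul]
  rw [hd, Real.Gamma_add_one hx.ne']
  field_simp
  ring

theorem sum_eq_digamma_sub (ψ : ℝ → ℝ) (hψ : ∀ x : ℝ, ψ x = deriv Real.Gamma x / Real.Gamma x)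
    (d n : ℕ) (h : d ≤ n) :
    ∑ l ∈ Finset.Icc (d + 1) n, 2 / (2 * (l : ℝ) - 1)
      = ψ ((n : ℝ) + 1 / 2) - ψ ((d : ℝ) + 1 / 2) := by
  induction n, h using Nat.le_induction with
  | base => simp
  | succ n hn ih =>
    have hpos : (0 : ℝ) < n + 1 / 2 := by positivity
    have h1 := Real.deriv_Gamma_div_Gamma_add_one _ hpos
    rw [← hψ, ← hψ] at h1
    have e : (((n + 1 : ℕ) : ℝ) + 1 / 2) = (n : ℝ) + 1 / 2 + 1 := by push_cast; ring
    have e2 : 2 / (2 * ((n + 1 : ℕ) : ℝ) - 1) = 1 / ((n : ℝ) + 1 / 2) := by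
      rw [div_eq_div_iff (by push_cast; linarith) hpos.ne']
      push_cast; ring
    rw [Finset.sum_Icc_succ_top (by omega), ih, e, h1, e2]
    ring

/-- For all integers `j, k ≥ 1`,
`∫₀¹ sin(jπx) sin(kπx) / sin(πx/2) dx = (1/π) Σ_{l=|j−k|+1}^{j+k} 2/(2l−1)
  = (1/π)(ψ(j+k+1/2) − ψ(|j−k|+1/2))`, where `ψ = Γ'/Γ` is the digamma function. -/
theorem matrix_element_inverse_sqrt (j k : ℕ) (hj : 1 ≤ j) (hk : 1 ≤ k)
    (d : ℕ) (hd : d = ((j : ℤ) - (k : ℤ)).natAbs)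
    (ψ : ℝ → ℝ) (hψ : ∀ x : ℝ, ψ x = deriv Real.Gamma x / Real.Gamma x) :
    (∫ x in (0 : ℝ)..1,
        Real.sin (j * Real.pi * x) * Real.sin (k * Real.pi * x)
          / Real.sin (Real.pi * x / 2))
      = 1 / Real.pi * ∑ l ∈ Finset.Icc (d + 1) (j + k), 2 / (2 * (l : ℝ) - 1) ∧
    (∫ x in (0 : ℝ)..1,
        Real.sin (j * Real.pi * x) * Real.sin (k * Real.pi * x)
          / Real.sin (Real.pi * x / 2))
      = 1 / Real.pi * (ψ ((j : ℝ) + k + 1 / 2) - ψ ((d : ℝ) + 1 / 2)) := by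
  have hsum : (∫ x in (0 : ℝ)..1,
        Real.sin (j * Real.pi * x) * Real.sin (k * Real.pi * x)
          / Real.sin (Real.pi * x / 2))
      = 1 / Real.pi * ∑ l ∈ Finset.Icc (d + 1) (j + k), 2 / (2 * (l : ℝ) - 1) := by
    rw [intervalIntegral.integral_congr (g := fun x => ∑ l ∈ Finset.Icc (d + 1) (j + k),
        Real.sin ((2 * (l : ℝ) - 1) * (Real.pi / 2) * x))]
    · rw [intervalIntegral.integral_finsetSum, Finset.mul_sum]
      · refine Finset.sum_congr rfl fun l hl => integral_sin_half_odd l ?_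
        have := (Finset.mem_Icc.mp hl).1
        omega
      · intro l _
        exact Continuous.intervalIntegrable (by fun_prop) _ _
    · intro x hx
      rw [Set.uIcc_of_le zero_le_one] at hx
      exact integrand_eq_sum j k d hd x hx
  refine ⟨hsum, ?_⟩
  rw [hsum, sum_eq_digamma_sub ψ hψ d (j + k) (by omega), Nat.cast_add]
end

section
/- For every integer l ≥ 0 and every real q > −1: ∫₀^{π/2} sin(x)^q · cos(2lx) dx = (−1)^l · (π / 2^{q+1}) · Γ(1+q) · Γ(l+1+q/2)^{-1} · Γ(1−l+q/2)^{-1}, where Γ^{-1} denotes the reciprocal Gamma function, extended by the value 0 at nonpositive integer arguments. -/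
/-!
Write `J(q, m) = ∫₀^{π/2} sin(x)^q cos(2mx) dx`. Integrating
`cos(2(m+1)x) + cos(2(m-1)x) = 2 cos(2mx) (1 - 2 sin² x)` against `sin(x)^q` gives
`J(q, m+1) + J(q, m-1) = 2 J(q, m) - 4 J(q+2, m)` (`integral_sin_rpow_cos_recurrence`).
The functional equation of `Γ` shows that the right-hand side of the formula, sign included,
satisfies the same recurrence (`sinCosGammaValue_recurrence` is the version with the sign removed).
Since both sides are even in `m`, the recurrence and the values `J(q, 0)` for all `q > -1`
determine everything by induction on `l`, simultaneously for all `q`. The value `J(q, 0)` is the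
Beta integral `B((q+1)/2, 1/2) / 2` under `t = sin² x`, brought into the stated form by
Legendre's duplication formula (`integral_sin_rpow`).
-/

open Real Set MeasureTheory in
/-- The change of variables `t = sin² x` turns the Beta integrand with parameters
`(q + 1) / 2` and `1 / 2` into `2 sin(x)^q`. -/
lemma sin_sq_pullback_beta (q : ℝ) {x : ℝ} (hx : x ∈ Ioo 0 (π / 2)) :
    |2 * sin x * cos x| • ((sin x ^ 2) ^ ((q + 1) / 2 - 1) * (1 - sin x ^ 2) ^ ((1 : ℝ) / 2 - 1))
      = 2 * sin x ^ q := by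
  have hs : 0 < sin x := sin_pos_of_pos_of_lt_pi hx.1 (by linarith [hx.2, pi_pos])
  have hc : 0 < cos x := cos_pos_of_mem_Ioo ⟨by linarith [hx.1, pi_pos], hx.2⟩
  rw [abs_of_pos (by positivity), ← cos_sq', ← rpow_natCast, ← rpow_natCast, ← rpow_mul hs.le,
    ← rpow_mul hc.le, smul_eq_mul]
  have h1 : ((2 : ℕ) : ℝ) * ((q + 1) / 2 - 1) = q - 1 := by push_cast; ring
  have h2 : ((2 : ℕ) : ℝ) * ((1 : ℝ) / 2 - 1) = -1 := by norm_num
  rw [h1, h2, rpow_neg_one, rpow_sub_one hs.ne']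
  field_simp

open Real Set in
lemma sin_sq_image_Ioo : (fun x => sin x ^ 2) '' Ioo 0 (π / 2) = Ioo 0 1 := by
  ext t
  constructor
  · rintro ⟨x, hx, rfl⟩
    have hs : 0 < sin x := sin_pos_of_pos_of_lt_pi hx.1 (by linarith [hx.2, pi_pos])
    have hc : 0 < cos x := cos_pos_of_mem_Ioo ⟨by linarith [hx.1, pi_pos], hx.2⟩
    have := sin_sq_add_cos_sq x
    exact ⟨by positivity, by simp only; nlinarith⟩
  · rintro ⟨h0, h1⟩
    refine ⟨arcsin (√t), ⟨arcsin_pos.2 (sqrt_pos.2 h0), arcsin_lt_pi_div_two.2 ?_⟩, ?_⟩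
    · rw [sqrt_lt' one_pos]; simpa using h1
    · have h2 : √t ≤ 1 := sqrt_le_one.2 h1.le
      simp only
      rw [sin_arcsin (by linarith [sqrt_nonneg t]) h2, sq_sqrt h0.le]

open Real Set in
lemma sin_sq_injOn_Ioo : InjOn (fun x => sin x ^ 2) (Ioo 0 (π / 2)) := by
  intro x hx y hy h
  have hsx : 0 < sin x := sin_pos_of_pos_of_lt_pi hx.1 (by linarith [hx.2, pi_pos])
  have hsy : 0 < sin y := sin_pos_of_pos_of_lt_pi hy.1 (by linarith [hy.2, pi_pos])
  have h' : sin x = sin y := (sq_eq_sq₀ hsx.le hsy.le).1 h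
  exact injOn_sin ⟨by linarith [hx.1, pi_pos], hx.2.le⟩ ⟨by linarith [hy.1, pi_pos], hy.2.le⟩ h'

open Real Set in
lemma sin_sq_hasDerivWithinAt_Ioo :
    ∀ x ∈ Ioo 0 (π / 2), HasDerivWithinAt (fun x => sin x ^ 2) (2 * sin x * cos x)
      (Ioo 0 (π / 2)) x := by
  intro x _
  simpa using! ((hasDerivAt_sin x).pow 2).hasDerivWithinAt

open Real Set MeasureTheory in
/-- Real form of Mathlib's complex Beta integral: convergence and value. -/
lemma real_beta_integral_s14 {u v : ℝ} (hu : 0 < u) (hv : 0 < v) :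
    IntegrableOn (fun t : ℝ => t ^ (u - 1) * (1 - t) ^ (v - 1)) (Ioo 0 1) ∧
    ∫ t in Ioo (0 : ℝ) 1, t ^ (u - 1) * (1 - t) ^ (v - 1) = Gamma u * Gamma v / Gamma (u + v) := by
  have hconv := Complex.betaIntegral_convergent (u := u) (v := v) (by simpa) (by simpa)
  rw [intervalIntegrable_iff_integrableOn_Ioo_of_le zero_le_one] at hconv
  have hcongr : EqOn (fun t : ℝ => (t : ℂ) ^ ((u : ℂ) - 1) * (1 - (t : ℂ)) ^ ((v : ℂ) - 1))
      (fun t : ℝ => ((t ^ (u - 1) * (1 - t) ^ (v - 1) : ℝ) : ℂ)) (Ioo 0 1) := by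
    intro t ht
    have h1 : 0 ≤ 1 - t := by linarith [ht.2]
    simp only
    rw [Complex.ofReal_mul, Complex.ofReal_cpow ht.1.le, Complex.ofReal_cpow h1]
    push_cast
    rfl
  have hint : IntegrableOn (fun t : ℝ => t ^ (u - 1) * (1 - t) ^ (v - 1)) (Ioo 0 1) := by
    have := (hconv.congr_fun hcongr measurableSet_Ioo).re
    simpa using! this
  refine ⟨hint, ?_⟩
  have hval := Complex.betaIntegral_eq_Gamma_mul_div u v (by simpa) (by simpa)
  rw [Complex.betaIntegral, intervalIntegral.integral_of_le zero_le_one,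
    integral_Ioc_eq_integral_Ioo, setIntegral_congr_fun measurableSet_Ioo hcongr,
    integral_complex_ofReal, ← Complex.ofReal_add, Complex.Gamma_ofReal, Complex.Gamma_ofReal,
    Complex.Gamma_ofReal] at hval
  exact_mod_cast hval

open Real Set MeasureTheory in
lemma intervalIntegrable_sin_rpow {q : ℝ} (hq : -1 < q) :
    IntervalIntegrable (fun x => sin x ^ q) volume 0 (π / 2) := by
  have hb := (real_beta_integral_s14 (u := (q + 1) / 2) (v := 1 / 2) (by linarith) (by norm_num)).1
  rw [← sin_sq_image_Ioo, integrableOn_image_iff_integrableOn_abs_deriv_smul measurableSet_Ioo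
    sin_sq_hasDerivWithinAt_Ioo sin_sq_injOn_Ioo] at hb
  have hb2 : IntegrableOn (fun x => 1 / 2 * (2 * sin x ^ q)) (Ioo 0 (π / 2)) :=
    (hb.congr_fun (fun x hx => sin_sq_pullback_beta q hx) measurableSet_Ioo).const_mul (1 / 2 : ℝ)
  rw [intervalIntegrable_iff_integrableOn_Ioo_of_le (by positivity)]
  refine hb2.congr_fun (fun x _ => ?_) measurableSet_Ioo
  ring

open Real Set MeasureTheory in
/-- The case `l = 0`: a Beta integral, rewritten with Legendre's duplication formula. -/
lemma integral_sin_rpow {q : ℝ} (hq : -1 < q) :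
    ∫ x in (0 : ℝ)..(π / 2), sin x ^ q
      = π / (2 : ℝ) ^ (q + 1) * Gamma (1 + q) * (Gamma (1 + q / 2))⁻¹ * (Gamma (1 + q / 2))⁻¹ := by
  have hb := (real_beta_integral_s14 (u := (q + 1) / 2) (v := 1 / 2) (by linarith) (by norm_num)).2
  rw [← sin_sq_image_Ioo, integral_image_eq_integral_abs_deriv_smul measurableSet_Ioo
    sin_sq_hasDerivWithinAt_Ioo sin_sq_injOn_Ioo,
    setIntegral_congr_fun measurableSet_Ioo (fun x hx => sin_sq_pullback_beta q hx),
    integral_const_mul, ← integral_Ioc_eq_integral_Ioo,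
    ← intervalIntegral.integral_of_le (by positivity), Gamma_one_half_eq] at hb
  have hdup := Gamma_mul_Gamma_add_half ((q + 1) / 2)
  have e1 : (q + 1) / 2 + 1 / 2 = 1 + q / 2 := by ring
  have e2 : 2 * ((q + 1) / 2) = 1 + q := by ring
  have e3 : 1 - (1 + q) = -q := by ring
  rw [e1, e2, e3, rpow_neg zero_le_two] at hdup
  rw [e1] at hb
  have hG : Gamma (1 + q / 2) ≠ 0 := (Gamma_pos_of_pos (by linarith)).ne'
  have h2 : (2 : ℝ) ^ q ≠ 0 := (rpow_pos_of_pos two_pos q).ne'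
  have hpi : √π * √π = π := mul_self_sqrt pi_pos.le
  rw [rpow_add_one two_ne_zero]
  rw [eq_div_iff hG] at hb
  generalize Gamma (1 + q / 2) = g at *
  field_simp at hdup ⊢
  linear_combination (2 ^ q * g) * hb + √π * hdup + Gamma (1 + q) * hpi

open Real in
/-- The recurrence `1/Γ(s) = s/Γ(s + 1)` holds for every real `s`, since Mathlib's junk value
`Γ(0) = 0` gives `(Γ(0))⁻¹ = 0`. -/
lemma inv_Gamma_eq_mul_inv_Gamma_add_one (s : ℝ) :
    (Gamma s)⁻¹ = s * (Gamma (s + 1))⁻¹ := by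
  rcases eq_or_ne s 0 with rfl | hs
  · simp
  · rw [Gamma_add_one hs, mul_inv, mul_inv_cancel_left₀ hs]

/-- The right-hand side of the formula, with a real parameter `m` in place of `l` and without
the sign `(-1)^l`. -/
noncomputable def sinCosGammaValue (m q : ℝ) : ℝ :=
  (Real.pi / (2 : ℝ) ^ (q + 1)) * Real.Gamma (1 + q) *
    (Real.Gamma (m + 1 + q / 2))⁻¹ * (Real.Gamma (1 - m + q / 2))⁻¹

open Real in
lemma sinCosGammaValue_neg (m q : ℝ) : sinCosGammaValue (-m) q = sinCosGammaValue m q := by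
  unfold sinCosGammaValue
  rw [show -m + 1 + q / 2 = 1 - m + q / 2 by ring, show 1 - -m + q / 2 = m + 1 + q / 2 by ring]
  ring

open Real in
/-- With `a = q/2 + m`, `b = q/2 - m`, every term is a multiple of `1/(Γ(a+2)Γ(b+2))`, and the
identity becomes `a(a+1) + b(b+1) + 2(a+1)(b+1) = (a+b+1)(a+b+2)`. -/
lemma sinCosGammaValue_recurrence {q : ℝ} (hq : -1 < q) (m : ℝ) :
    sinCosGammaValue (m + 1) q + sinCosGammaValue (m - 1) q
      = 4 * sinCosGammaValue m (q + 2) - 2 * sinCosGammaValue m q := by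
  unfold sinCosGammaValue
  have hg : Gamma (1 + (q + 2)) = (q + 2) * (q + 1) * Gamma (1 + q) := by
    rw [show 1 + (q + 2) = (1 + q + 1) + 1 by ring, Gamma_add_one (by linarith),
      Gamma_add_one (by linarith)]
    ring
  have hp : (2 : ℝ) ^ (q + 2 + 1) = 4 * 2 ^ (q + 1) := by
    rw [show q + 2 + 1 = q + 1 + (2 : ℕ) by push_cast; ring, rpow_add_natCast two_ne_zero]
    ring
  have a0 := inv_Gamma_eq_mul_inv_Gamma_add_one (m + q / 2)
  have a1 := inv_Gamma_eq_mul_inv_Gamma_add_one (m + q / 2 + 1)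
  have b0 := inv_Gamma_eq_mul_inv_Gamma_add_one (-m + q / 2)
  have b1 := inv_Gamma_eq_mul_inv_Gamma_add_one (-m + q / 2 + 1)
  rw [hg, hp, show m + 1 + 1 + q / 2 = m + q / 2 + 1 + 1 by ring,
    show 1 - (m + 1) + q / 2 = -m + q / 2 by ring, show m - 1 + 1 + q / 2 = m + q / 2 by ring,
    show 1 - (m - 1) + q / 2 = -m + q / 2 + 1 + 1 by ring,
    show m + 1 + (q + 2) / 2 = m + q / 2 + 1 + 1 by ring,
    show 1 - m + (q + 2) / 2 = -m + q / 2 + 1 + 1 by ring,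
    show m + 1 + q / 2 = m + q / 2 + 1 by ring,
    show 1 - m + q / 2 = -m + q / 2 + 1 by ring, a0, b0, a1, b1]
  have h2 : (2 : ℝ) ^ (q + 1) ≠ 0 := (rpow_pos_of_pos two_pos _).ne'
  generalize (Gamma (m + q / 2 + 1 + 1))⁻¹ = A
  generalize (Gamma (-m + q / 2 + 1 + 1))⁻¹ = B
  field_simp
  ring

open Real MeasureTheory in
lemma intervalIntegrable_sin_rpow_mul_cos {q : ℝ} (hq : -1 < q) (m : ℝ) :
    IntervalIntegrable (fun x => sin x ^ q * cos (2 * m * x)) volume 0 (π / 2) :=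
  (intervalIntegrable_sin_rpow hq).mul_continuousOn (by fun_prop)

open Real MeasureTheory in
/-- The integrals satisfy the recurrence obtained by integrating
`cos(2(m+1)x) + cos(2(m-1)x) = 2 cos(2mx) (1 - 2 sin² x)` against `sin(x)^q`. -/
lemma integral_sin_rpow_cos_recurrence {q : ℝ} (hq : -1 < q) (m : ℝ) :
    (∫ x in (0 : ℝ)..(π / 2), sin x ^ q * cos (2 * (m + 1) * x))
      + ∫ x in (0 : ℝ)..(π / 2), sin x ^ q * cos (2 * (m - 1) * x)
      = 2 * (∫ x in (0 : ℝ)..(π / 2), sin x ^ q * cos (2 * m * x))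
        - 4 * ∫ x in (0 : ℝ)..(π / 2), sin x ^ (q + 2) * cos (2 * m * x) := by
  rw [← intervalIntegral.integral_add (intervalIntegrable_sin_rpow_mul_cos hq _)
      (intervalIntegrable_sin_rpow_mul_cos hq _),
    ← intervalIntegral.integral_const_mul, ← intervalIntegral.integral_const_mul,
    ← intervalIntegral.integral_sub ((intervalIntegrable_sin_rpow_mul_cos hq _).const_mul _)
      ((intervalIntegrable_sin_rpow_mul_cos (by linarith) _).const_mul _)]
  rw [intervalIntegral.integral_of_le (by positivity), intervalIntegral.integral_of_le (by positivity)]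
  refine setIntegral_congr_fun measurableSet_Ioc (fun x hx => ?_)
  have hs : 0 < sin x := sin_pos_of_pos_of_lt_pi hx.1 (by linarith [hx.2, pi_pos])
  have h1 : sin x ^ (q + 2) = sin x ^ q * sin x ^ 2 := by
    exact_mod_cast rpow_add_natCast hs.ne' q 2
  rw [h1, show 2 * (m + 1) * x = 2 * m * x + 2 * x by ring,
    show 2 * (m - 1) * x = 2 * m * x - 2 * x by ring, cos_add, cos_sub, cos_two_mul, cos_sq']
  ring

open Real in
/-- Both sides satisfy the same three-term recurrence in `l`; the case `l = 1` comes from the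
recurrence at `m = 0`, where both sides are even in `m`. -/
lemma integral_eq_sinCosGammaValue (l : ℕ) : ∀ q : ℝ, -1 < q →
    ∫ x in (0 : ℝ)..(π / 2), sin x ^ q * cos (2 * l * x)
      = (-1 : ℝ) ^ l * sinCosGammaValue l q := by
  have h0 : ∀ q : ℝ, -1 < q → ∫ x in (0 : ℝ)..(π / 2), sin x ^ q * cos (2 * 0 * x)
      = sinCosGammaValue 0 q := by
    intro q hq
    simpa [sinCosGammaValue] using integral_sin_rpow hq
  induction l using Nat.twoStepInduction with
  | zero => simpa using h0
  | one =>
    intro q hq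
    have hI := integral_sin_rpow_cos_recurrence hq 0
    have hV := sinCosGammaValue_recurrence hq 0
    rw [h0 q hq, h0 (q + 2) (by linarith)] at hI
    have hneg : ∀ x : ℝ, cos (2 * (0 - 1) * x) = cos (2 * (0 + 1) * x) := by
      intro x
      rw [← cos_neg]
      ring_nf
    simp only [hneg] at hI
    rw [zero_sub, sinCosGammaValue_neg, zero_add] at hV
    simp only [zero_add] at hI
    push_cast
    linear_combination hI / 2 + hV / 2
  | more l ih0 ih1 =>
    intro q hq
    have hI := integral_sin_rpow_cos_recurrence hq (l + 1)
    have hV := sinCosGammaValue_recurrence hq (l + 1)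
    have i0 := ih0 q hq
    have i1 := ih1 q hq
    have i2 := ih1 (q + 2) (by linarith)
    push_cast at i1 i2 ⊢
    rw [add_sub_cancel_right] at hI hV
    rw [show (l : ℝ) + 1 + 1 = l + 2 by ring] at hI hV
    rw [i0, i1, i2] at hI
    linear_combination hI + (-1 : ℝ) ^ l * (-hV)

/-- For every integer `l ≥ 0` and every real `q > −1`,
`∫₀^{π/2} sin(x)^q cos(2lx) dx = (−1)^l (π/2^{q+1}) Γ(1+q) Γ(l+1+q/2)⁻¹ Γ(1−l+q/2)⁻¹`,
where the reciprocal Gamma function takes the value `0` at nonpositive integers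
(Mathlib's `Real.Gamma` vanishes at nonpositive integers, so `(Real.Gamma z)⁻¹` realizes
this convention). -/
theorem integral_sin_rpow_cos (l : ℕ) (q : ℝ) (hq : -1 < q) :
    ∫ x in (0 : ℝ)..(Real.pi / 2), Real.sin x ^ q * Real.cos (2 * l * x)
      = (-1 : ℝ) ^ l * (Real.pi / (2 : ℝ) ^ (q + 1)) * Real.Gamma (1 + q) *
        (Real.Gamma ((l : ℝ) + 1 + q / 2))⁻¹ * (Real.Gamma (1 - (l : ℝ) + q / 2))⁻¹ := by
  rw [integral_eq_sinCosGammaValue l q hq, sinCosGammaValue]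
  ring
end

section
/- For every real q with 0 < q < 2, the series Σ_{k=1}^∞ Γ(k − q/2)/Γ(k + 1 + q/2) converges and equals Γ(1 − q/2) / ( q · Γ(1 + q/2) ). -/
/-!
Write `a = q / 2` and `R m = Γ(m + 1 - a) / Γ(m + 1 + a)`. The functional equation of `Γ` gives
`R m - R (m + 1) = q * (Γ(m + 1 - a) / Γ(m + 2 + a))`, because `(m + 1 + a) - (m + 1 - a) = q`.
So the series telescopes to `(R 0 - lim R) / q`, and its terms are nonnegative. The limit of `R`
is zero: log-convexity of `Γ` between `m` and `m + 1` gives `Γ(m + 1 - a) ≤ m ^ (-a) * Γ(m + 1)`,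
and `Γ(m + 1) ≤ Γ(m + 1 + a)` by monotonicity of `Γ` on `[2, ∞)`.
-/

open Filter Topology

theorem gamma_ratio_le {a : ℝ} (ha : 0 < a) (ha1 : a < 1) {n : ℕ} (hn : 1 ≤ n) :
    Real.Gamma ((n : ℝ) + 1 - a) / Real.Gamma ((n : ℝ) + 1 + a) ≤ (n : ℝ) ^ (-a) := by
  have hn1 : (1 : ℝ) ≤ n := by exact_mod_cast hn
  have hn0 : (0 : ℝ) < n := by linarith
  have hG : 0 < Real.Gamma (n : ℝ) := Real.Gamma_pos_of_pos hn0
  have hconv := Real.Gamma_mul_add_mul_le_rpow_Gamma_mul_rpow_Gamma hn0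
    (show (0 : ℝ) < n + 1 by linarith) ha (show 0 < 1 - a by linarith) (by ring)
  have hmono : Real.Gamma ((n : ℝ) + 1) ≤ Real.Gamma ((n : ℝ) + 1 + a) :=
    Real.Gamma_strictMonoOn_Ici.monotoneOn (Set.mem_Ici.2 (by linarith))
      (Set.mem_Ici.2 (by linarith)) (by linarith)
  have hrhs : Real.Gamma (n : ℝ) ^ a * Real.Gamma ((n : ℝ) + 1) ^ (1 - a)
      = (n : ℝ) ^ (-a) * Real.Gamma ((n : ℝ) + 1) := by
    rw [Real.Gamma_add_one hn0.ne', Real.mul_rpow hn0.le hG.le, Real.rpow_sub hn0,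
      Real.rpow_sub hG, Real.rpow_neg hn0.le, Real.rpow_one, Real.rpow_one]
    have := (Real.rpow_pos_of_pos hG a).ne'
    field_simp
  rw [hrhs, show a * (n : ℝ) + (1 - a) * (n + 1) = n + 1 - a by ring] at hconv
  rw [div_le_iff₀ (Real.Gamma_pos_of_pos (by linarith))]
  exact hconv.trans (mul_le_mul_of_nonneg_left hmono (Real.rpow_nonneg hn0.le _))

theorem tendsto_gamma_ratio {a : ℝ} (ha : 0 < a) (ha1 : a < 1) :
    Tendsto (fun n : ℕ => Real.Gamma ((n : ℝ) + 1 - a) / Real.Gamma ((n : ℝ) + 1 + a))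
      atTop (𝓝 0) := by
  refine squeeze_zero' (Eventually.of_forall fun n => ?_)
    ((eventually_ge_atTop 1).mono fun n hn => gamma_ratio_le ha ha1 hn)
    ((tendsto_rpow_neg_atTop ha).comp tendsto_natCast_atTop_atTop)
  have : (0 : ℝ) ≤ n := n.cast_nonneg
  exact div_nonneg (Real.Gamma_pos_of_pos (by linarith)).le
    (Real.Gamma_pos_of_pos (by linarith)).le

/-- For every real `q` with `0 < q < 2`, the series
`Σ_{k=1}^∞ Γ(k − q/2)/Γ(k + 1 + q/2)` converges and equals
`Γ(1 − q/2)/(q · Γ(1 + q/2))`.  (The sum over `k ≥ 1` is indexed here by `m = k − 1 ∈ ℕ`.) -/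
theorem gamma_ratio_series (q : ℝ) (hq : 0 < q) (hq' : q < 2) :
    HasSum (fun m : ℕ => Real.Gamma ((m : ℝ) + 1 - q / 2) / Real.Gamma ((m : ℝ) + 2 + q / 2))
      (Real.Gamma (1 - q / 2) / (q * Real.Gamma (1 + q / 2))) := by
  set R : ℕ → ℝ := fun n =>
    Real.Gamma ((n : ℝ) + 1 - q / 2) / Real.Gamma ((n : ℝ) + 1 + q / 2) with hR
  have hlim : Tendsto R atTop (𝓝 0) := tendsto_gamma_ratio (by linarith) (by linarith)
  have hstep (m : ℕ) : Real.Gamma ((m : ℝ) + 1 - q / 2) / Real.Gamma ((m : ℝ) + 2 + q / 2)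
      = R m / q - R (m + 1) / q := by
    have hm : (0 : ℝ) ≤ m := m.cast_nonneg
    have hx : (0 : ℝ) < m + 1 - q / 2 := by linarith
    have hy : (0 : ℝ) < m + 1 + q / 2 := by linarith
    have hGy := (Real.Gamma_pos_of_pos hy).ne'
    simp only [hR]
    push_cast
    rw [show (m : ℝ) + 1 + 1 - q / 2 = (m + 1 - q / 2) + 1 by ring,
      show (m : ℝ) + 1 + 1 + q / 2 = (m + 1 + q / 2) + 1 by ring,
      show (m : ℝ) + 2 + q / 2 = (m + 1 + q / 2) + 1 by ring,
      Real.Gamma_add_one hx.ne', Real.Gamma_add_one hy.ne']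
    generalize Real.Gamma ((m : ℝ) + 1 + q / 2) = B at *
    generalize Real.Gamma ((m : ℝ) + 1 - q / 2) = A at *
    have hy' := hy.ne'
    generalize hY : (m : ℝ) + 1 + q / 2 = Y at *
    rw [show (m : ℝ) + 1 - q / 2 = Y - q by linarith]
    field_simp
    ring
  rw [hasSum_iff_tendsto_nat_of_nonneg]
  · have hsum (n : ℕ) : ∑ m ∈ Finset.range n,
        Real.Gamma ((m : ℝ) + 1 - q / 2) / Real.Gamma ((m : ℝ) + 2 + q / 2)
        = R 0 / q - R n / q := by
      rw [Finset.sum_congr rfl fun m _ => hstep m]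
      exact Finset.sum_range_sub' (fun m => R m / q) n
    simp only [hsum]
    have h0 : Real.Gamma (1 - q / 2) / (q * Real.Gamma (1 + q / 2)) = R 0 / q - 0 / q := by
      simp only [hR, Nat.cast_zero, zero_add, zero_div, sub_zero]
      rw [div_div, mul_comm q]
    rw [h0]
    exact tendsto_const_nhds.sub (hlim.div_const q)
  · intro m
    have hm : (0 : ℝ) ≤ m := m.cast_nonneg
    exact div_nonneg (Real.Gamma_pos_of_pos (by linarith)).le
      (Real.Gamma_pos_of_pos (by linarith)).le
end

section
/- For all integers j, k ≥ 1: (a) Σ_{l=|j−k|+1}^{j+k} 2/(2l−1) > log( (j+k+1/2)/(|j−k|+1/2) ) > 0; (b) if j ≠ k, then Σ_{l=|j−k|+1}^{j+k} 2/(2l−1) < log( (j+k−1/2)/(|j−k|−1/2) ); and (c) Σ_{l=1}^{2j} 2/(2l−1) < 2 + log(4j−1). -/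
/-!
Each summand is `1 / x` with `x = l − 1/2`. The strict inequality `log t < t − 1` for `t ≠ 1`, taken
at `t = (x + 1) / x` and at `t = (x − 1) / x`, gives
`log (x + 1) − log x < 1 / x < log x − log (x − 1)`, the right half for `x > 1`, i.e. `l ≥ 2`.
Both bounds telescope over `d + 1 ≤ l ≤ n` (`log_sub_lt_sum` and `sum_lt_log_sub`), which yields (a)
and (b). For (c), the term `l = 1` equals `2`, and the remaining terms are bounded by the telescoped
upper bound with `d = 1`, namely `log (2j − 1/2) − log (1/2) = log (4j − 1)`.
-/

lemma log_succ_sub_log_lt {x : ℝ} (hx : 0 < x) :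
    Real.log (x + 1) - Real.log x < 1 / x := by
  have hne : (x + 1) / x ≠ 1 := by
    rw [Ne, div_eq_one_iff_eq hx.ne']; linarith
  have h := Real.log_lt_sub_one_of_pos (by positivity : 0 < (x + 1) / x) hne
  rw [Real.log_div (by positivity) hx.ne'] at h
  have e : (x + 1) / x - 1 = 1 / x := by field_simp; ring
  linarith

lemma lt_log_sub_log_pred {x : ℝ} (hx : 1 < x) :
    1 / x < Real.log x - Real.log (x - 1) := by
  have h0 : 0 < x := by linarith
  have h1 : 0 < x - 1 := by linarith
  have hne : (x - 1) / x ≠ 1 := by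
    rw [Ne, div_eq_one_iff_eq h0.ne']; linarith
  have h := Real.log_lt_sub_one_of_pos (by positivity : 0 < (x - 1) / x) hne
  rw [Real.log_div h1.ne' h0.ne'] at h
  have e : (x - 1) / x - 1 = -(1 / x) := by field_simp; ring
  linarith

lemma two_div_two_mul_sub_one (y : ℝ) : 2 / (2 * y - 1) = 1 / (y - 1 / 2) := by
  rw [show 2 * y - 1 = 2 * (y - 1 / 2) by ring, div_mul_eq_div_div, div_self two_ne_zero]

lemma log_sub_lt_sum {d n : ℕ} (h : d + 1 ≤ n) :
    Real.log ((n : ℝ) + 1 / 2) - Real.log ((d : ℝ) + 1 / 2)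
      < ∑ l ∈ Finset.Icc (d + 1) n, 2 / (2 * (l : ℝ) - 1) := by
  have step (m : ℕ) : Real.log (((m + 1 : ℕ) : ℝ) + 1 / 2) - Real.log ((m : ℝ) + 1 / 2)
      < 2 / (2 * ((m + 1 : ℕ) : ℝ) - 1) := by
    have := log_succ_sub_log_lt (by positivity : (0 : ℝ) < m + 1 / 2)
    rw [two_div_two_mul_sub_one]
    push_cast
    convert this using 2 <;> ring_nf
  induction n, h using Nat.le_induction with
  | base => simpa only [Finset.Icc_self, Finset.sum_singleton] using step d
  | succ n hn ih =>
    rw [Finset.sum_Icc_succ_top (by omega)]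
    linarith [step n]

/-- The assumption `1 ≤ d` keeps the argument `d - 1 / 2` of the logarithm positive. -/
lemma sum_lt_log_sub {d n : ℕ} (hd : 1 ≤ d) (h : d + 1 ≤ n) :
    ∑ l ∈ Finset.Icc (d + 1) n, 2 / (2 * (l : ℝ) - 1)
      < Real.log ((n : ℝ) - 1 / 2) - Real.log ((d : ℝ) - 1 / 2) := by
  have step (m : ℕ) (hm : 1 ≤ m) : 2 / (2 * ((m + 1 : ℕ) : ℝ) - 1)
      < Real.log (((m + 1 : ℕ) : ℝ) - 1 / 2) - Real.log ((m : ℝ) - 1 / 2) := by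
    have hm' : (1 : ℝ) ≤ m := by exact_mod_cast hm
    have := lt_log_sub_log_pred (by linarith : (1 : ℝ) < (m : ℝ) + 1 - 1 / 2)
    rw [two_div_two_mul_sub_one]
    push_cast
    rwa [show (m : ℝ) + 1 - 1 / 2 - 1 = m - 1 / 2 by ring] at this
  induction n, h using Nat.le_induction with
  | base => simpa only [Finset.Icc_self, Finset.sum_singleton] using step d hd
  | succ n hn ih =>
    rw [Finset.sum_Icc_succ_top (by omega)]
    linarith [step n (by omega)]


/-- For all integers `j, k ≥ 1`, with `d = |j − k|`:
(a) `Σ_{l=d+1}^{j+k} 2/(2l−1) > log((j+k+1/2)/(d+1/2)) > 0`;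
(b) if `j ≠ k` then `Σ_{l=d+1}^{j+k} 2/(2l−1) < log((j+k−1/2)/(d−1/2))`;
(c) `Σ_{l=1}^{2j} 2/(2l−1) < 2 + log(4j−1)`. -/
theorem harmonic_like_sum_log_bounds (j k : ℕ) (hj : 1 ≤ j) (hk : 1 ≤ k)
    (d : ℕ) (hd : d = ((j : ℤ) - (k : ℤ)).natAbs) :
    (Real.log (((j : ℝ) + k + 1 / 2) / ((d : ℝ) + 1 / 2))
        < ∑ l ∈ Finset.Icc (d + 1) (j + k), 2 / (2 * (l : ℝ) - 1) ∧
      0 < Real.log (((j : ℝ) + k + 1 / 2) / ((d : ℝ) + 1 / 2))) ∧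
    (j ≠ k →
      ∑ l ∈ Finset.Icc (d + 1) (j + k), 2 / (2 * (l : ℝ) - 1)
        < Real.log (((j : ℝ) + k - 1 / 2) / ((d : ℝ) - 1 / 2))) ∧
    ∑ l ∈ Finset.Icc 1 (2 * j), 2 / (2 * (l : ℝ) - 1)
      < 2 + Real.log (4 * (j : ℝ) - 1) := by
  have hdn : d + 1 ≤ j + k := by omega
  have hdn' : (d : ℝ) + 1 ≤ j + k := by exact_mod_cast hdn
  have hd0 : (0 : ℝ) ≤ d := d.cast_nonneg
  refine ⟨⟨?_, ?_⟩, ?_, ?_⟩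
  · rw [Real.log_div (by positivity) (by positivity)]
    simpa only [Nat.cast_add] using log_sub_lt_sum hdn
  · apply Real.log_pos
    rw [one_lt_div (by positivity)]
    linarith
  · intro hjk
    have hd1 : 1 ≤ d := by omega
    have hd1' : (1 : ℝ) ≤ d := by exact_mod_cast hd1
    rw [Real.log_div (by linarith) (by linarith)]
    simpa only [Nat.cast_add] using sum_lt_log_sub hd1 hdn
  · have hj' : (1 : ℝ) ≤ j := by exact_mod_cast hj
    have h := sum_lt_log_sub (d := 1) (n := 2 * j) le_rfl (by omega)
    rw [← Real.log_div (by push_cast; linarith) (by norm_num)] at h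
    rw [← Finset.add_sum_Ioc_eq_sum_Icc (by omega : 1 ≤ 2 * j),
      ← Finset.Icc_add_one_left_eq_Ioc]
    have e : (((2 * j : ℕ) : ℝ) - 1 / 2) / (((1 : ℕ) : ℝ) - 1 / 2) = 4 * (j : ℝ) - 1 := by
      push_cast; ring
    rw [e] at h
    norm_num at h ⊢
    linarith
end

section
/- For every integer n ≥ 2: Σ_{k=1}^{n−1} ( Γ(n+k−1/4)/Γ(n+k+5/4) − Γ(n−k−1/4)/Γ(n−k+5/4) ) ≥ −(1/2)·( Γ(2n−1/4)/Γ(2n+5/4) − Γ(−1/4)/Γ(5/4) ). -/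
/-!
Put `a x = Γ(x - 1/4) / Γ(x + 5/4)` and `b x = Γ(x - 1/4) / Γ(x + 1/4)`. The recurrence
`Γ(s + 1) = s Γ(s)` gives `a x = 2 (b x - b (x + 1))` (`gammaA_eq`), so both halves of the sum
telescope, to `2 (b (n + 1) - b (2n))` and `2 (b 1 - b n)`. The constant on the right-hand side
satisfies `a 0 = -4 b 1`, which cancels the `b 1` contribution exactly. What remains is
`2 (b (n + 1) + b n - b (2n)) + a (2n) / 2 ≥ 0`; it holds because `b` is positive and
`b n - b (2n)` is half the sum of the positive numbers `a n, …, a (2n - 1)`.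
-/

/-- The ratio `Γ(x - 1/4) / Γ(x + 5/4)` summed in the theorem. -/
noncomputable def gammaA (x : ℝ) : ℝ := Real.Gamma (x - 1 / 4) / Real.Gamma (x + 5 / 4)

/-- The ratio `Γ(x - 1/4) / Γ(x + 1/4)`; `-2 * gammaB` is a discrete antiderivative of `gammaA`. -/
noncomputable def gammaB (x : ℝ) : ℝ := Real.Gamma (x - 1 / 4) / Real.Gamma (x + 1 / 4)

lemma gammaA_pos {x : ℝ} (hx : 1 / 4 < x) : 0 < gammaA x :=
  div_pos (Real.Gamma_pos_of_pos (by linarith)) (Real.Gamma_pos_of_pos (by linarith))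

lemma gammaB_pos {x : ℝ} (hx : 1 / 4 < x) : 0 < gammaB x :=
  div_pos (Real.Gamma_pos_of_pos (by linarith)) (Real.Gamma_pos_of_pos (by linarith))

/-- The telescoping identity. -/
lemma gammaA_eq {x : ℝ} (hx : 1 / 4 < x) : gammaA x = 2 * (gammaB x - gammaB (x + 1)) := by
  have h1 : Real.Gamma (x + 5 / 4) = (x + 1 / 4) * Real.Gamma (x + 1 / 4) := by
    rw [← Real.Gamma_add_one (by linarith)]; ring_nf
  have h2 : Real.Gamma (x + 1 - 1 / 4) = (x - 1 / 4) * Real.Gamma (x - 1 / 4) := by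
    rw [← Real.Gamma_add_one (by linarith)]; ring_nf
  have h3 : x + 1 + 1 / 4 = x + 5 / 4 := by ring
  have hp : 0 < Real.Gamma (x + 1 / 4) := Real.Gamma_pos_of_pos (by linarith)
  have hx' : x + 1 / 4 ≠ 0 := by linarith
  unfold gammaA gammaB
  rw [h3, h1, h2]
  generalize Real.Gamma (x + 1 / 4) = G at *
  generalize Real.Gamma (x - 1 / 4) = H at *
  have hG := hp.ne'
  have : H / G = (x + 1 / 4) * H / ((x + 1 / 4) * G) := by rw [mul_div_mul_left _ _ hx']
  rw [this, ← sub_div, ← mul_div_assoc]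
  congr 1
  ring

/-- The value at `0`, where `Γ(-1/4)` is reached from `Γ(3/4)` by the recurrence. -/
lemma gammaA_zero : gammaA 0 = -4 * gammaB 1 := by
  have h : Real.Gamma (3 / 4) = (-(1 / 4)) * Real.Gamma (-(1 / 4)) := by
    rw [← Real.Gamma_add_one (by norm_num)]; norm_num
  unfold gammaA gammaB
  rw [show (0 : ℝ) - 1 / 4 = -(1 / 4) by norm_num, show (0 : ℝ) + 5 / 4 = 5 / 4 by norm_num,
    show (1 : ℝ) - 1 / 4 = 3 / 4 by norm_num, show (1 : ℝ) + 1 / 4 = 5 / 4 by norm_num, h]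
  ring

lemma sum_gammaA_add {x : ℝ} (hx : 0 ≤ x) (N : ℕ) :
    ∑ k ∈ Finset.Icc 1 N, gammaA (x + k) = 2 * (gammaB (x + 1) - gammaB (x + N + 1)) := by
  induction N with
  | zero => simp
  | succ N ih =>
    rw [Finset.sum_Icc_succ_top (by omega), ih, gammaA_eq (by push_cast; linarith [(Nat.cast_nonneg N : (0 : ℝ) ≤ N)])]
    push_cast
    ring_nf

lemma sum_gammaA_sub {x : ℝ} (N : ℕ) (hx : (N : ℝ) + 1 ≤ x) :
    ∑ k ∈ Finset.Icc 1 N, gammaA (x - k) = 2 * (gammaB (x - N) - gammaB x) := by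
  induction N with
  | zero => simp
  | succ N ih =>
    push_cast at hx
    rw [Finset.sum_Icc_succ_top (by omega), ih (by linarith),
      gammaA_eq (by push_cast; linarith)]
    push_cast
    ring_nf

/-- `gammaB` decreases along unit steps, since `gammaA` is positive. -/
lemma gammaB_add_nat_le {x : ℝ} (hx : 1 / 4 < x) (N : ℕ) : gammaB (x + N) ≤ gammaB x := by
  induction N with
  | zero => simp
  | succ N ih =>
    have hN : 1 / 4 < x + N := by linarith [(Nat.cast_nonneg N : (0 : ℝ) ≤ N)]
    have h1 := gammaA_pos hN
    rw [gammaA_eq hN] at h1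
    push_cast
    rw [← add_assoc]
    linarith

theorem gamma_ratio_sum_lower_bound (n : ℕ) (hn : 2 ≤ n) :
    ∑ k ∈ Finset.Icc 1 (n - 1),
        (Real.Gamma ((n : ℝ) + k - 1 / 4) / Real.Gamma ((n : ℝ) + k + 5 / 4)
          - Real.Gamma ((n : ℝ) - k - 1 / 4) / Real.Gamma ((n : ℝ) - k + 5 / 4))
      ≥ -(1 / 2) * (Real.Gamma (2 * (n : ℝ) - 1 / 4) / Real.Gamma (2 * (n : ℝ) + 5 / 4)
          - Real.Gamma (-(1 / 4)) / Real.Gamma (5 / 4)) := by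
  have hn' : (2 : ℝ) ≤ n := by exact_mod_cast hn
  have hc : ((n - 1 : ℕ) : ℝ) = (n : ℝ) - 1 := by
    rw [Nat.cast_sub (by omega), Nat.cast_one]
  have h0 : Real.Gamma (-(1 / 4)) / Real.Gamma (5 / 4) = gammaA 0 := by
    unfold gammaA; norm_num
  have hsum : ∑ k ∈ Finset.Icc 1 (n - 1), (gammaA ((n : ℝ) + k) - gammaA ((n : ℝ) - k))
      = 2 * (gammaB (n + 1) - gammaB (2 * n)) - 2 * (gammaB 1 - gammaB n) := by
    rw [Finset.sum_sub_distrib, sum_gammaA_add (by linarith),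
      sum_gammaA_sub _ (by rw [hc]; linarith), hc,
      show (n : ℝ) + (n - 1) + 1 = 2 * n by ring, show (n : ℝ) - (n - 1) = 1 by ring]
  rw [h0]
  change ∑ k ∈ Finset.Icc 1 (n - 1), (gammaA ((n : ℝ) + k) - gammaA ((n : ℝ) - k))
    ≥ -(1 / 2) * (gammaA (2 * n) - gammaA 0)
  rw [hsum, gammaA_zero]
  have h1 := gammaB_pos (x := (n : ℝ) + 1) (by linarith)
  have h2 := gammaA_pos (x := 2 * (n : ℝ)) (by linarith)
  have h3 := gammaB_add_nat_le (x := (n : ℝ)) (by linarith) n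
  rw [← two_mul] at h3
  linarith
end

section
/- For every integer n ≥ 1, the symmetric n×n Toeplitz matrix T with entries T_{jk} = −(1/π) · ((j−k)² − 1/4)^{-1} (so T_{jj} = 4/π on the diagonal and T_{jk} < 0 off the diagonal) satisfies T ≥ (4/(π(2n+1)))·I in the Loewner order; in particular T is positive definite. This rests on the exact identity Σ_{l=1}^{n−1} 1/(l² − 1/4) = 2 − 2/(2n−1) so that (4/π) − (2/π)·Σ_{l=1}^{n−1} 1/(l²−1/4) = 4/(π(2n−1)) ≥ 4/(π(2n+1)). -/
/-!
The off-diagonal entries of `T` are negative, so Gershgorin's lower bound on the spectrum is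
the smallest row sum of `T`. In quadratic-form terms, for a symmetric matrix `A`,
`xᵀAx = ∑ j, rⱼ xⱼ² - (1/2) ∑ j k, Aⱼₖ (xⱼ - xₖ)²` with `rⱼ` the row sums, which is nonnegative once
`rⱼ ≥ 0` and `Aⱼₖ ≤ 0` for `j ≠ k` (`posSemidef_of_row_sum_nonneg`).

Row sums of `T` telescope because `(d² - 1/4)⁻¹ = (d - 1/2)⁻¹ - (d + 1/2)⁻¹`: row `j` adds up to
`(1/π) (a⁻¹ + b⁻¹)` with `a = j + 1/2`, `b = n - j - 1/2`. As `a + b = n`, each of `a⁻¹`, `b⁻¹`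
is at least `1/n`, so the row sum is at least `2/(πn)`, which exceeds `4/(π(2n+1))`.
-/

open Matrix

/-- A symmetric real matrix with nonpositive off-diagonal entries and nonnegative row sums is
positive semidefinite: the case of Gershgorin's theorem that applies to `T - c • 1`. -/
lemma posSemidef_of_row_sum_nonneg {ι : Type*} [Fintype ι] (A : Matrix ι ι ℝ)
    (hs : ∀ j k, A j k = A k j) (ho : ∀ j k, j ≠ k → A j k ≤ 0) (hr : ∀ j, 0 ≤ ∑ k, A j k) :
    A.PosSemidef := by
  refine PosSemidef.of_dotProduct_mulVec_nonneg (by ext j k; simp [hs j k]) fun x => ?_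
  have e : star x ⬝ᵥ A *ᵥ x = ∑ j, ∑ k, x j * A j k * x k := by
    simp [dotProduct, mulVec, Finset.mul_sum, mul_assoc]
  have e1 : ∑ j, ∑ k, A j k * x k ^ 2 = ∑ j, ∑ k, A j k * x j ^ 2 := by
    rw [Finset.sum_comm]
    simp_rw [fun j k => hs k j]
  have e2 : 0 ≤ ∑ j, ∑ k, A j k * x j ^ 2 :=
    Finset.sum_nonneg fun j _ => by
      rw [← Finset.sum_mul]
      exact mul_nonneg (hr j) (sq_nonneg _)
  have e3 : ∑ j, ∑ k, A j k * (x j - x k) ^ 2 ≤ 0 :=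
    Finset.sum_nonpos fun j _ => Finset.sum_nonpos fun k _ => by
      by_cases h : j = k
      · simp [h]
      · exact mul_nonpos_of_nonpos_of_nonneg (ho j k h) (sq_nonneg _)
  have e4 : ∑ j, ∑ k, A j k * (x j - x k) ^ 2 = ∑ j, ∑ k, A j k * x j ^ 2
      + ∑ j, ∑ k, A j k * x k ^ 2 - 2 * ∑ j, ∑ k, x j * A j k * x k := by
    simp only [Finset.mul_sum, ← Finset.sum_add_distrib, ← Finset.sum_sub_distrib]
    exact Finset.sum_congr rfl fun j _ => Finset.sum_congr rfl fun k _ => by ring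
  rw [e]
  linarith

lemma int_add_half_ne_zero (d : ℤ) : (d : ℝ) + 1 / 2 ≠ 0 := by
  intro h
  have h2 : (2 * d + 1 : ℤ) = 0 := by
    have : (2 * (d : ℝ) + 1) = 0 := by linarith
    exact_mod_cast this
  omega

lemma inv_sq_sub_quarter (d : ℤ) :
    ((d : ℝ) ^ 2 - 1 / 4)⁻¹ = ((d : ℝ) - 1 / 2)⁻¹ - ((d : ℝ) + 1 / 2)⁻¹ := by
  have h1 := int_add_half_ne_zero d
  have h2 : (d : ℝ) - 1 / 2 ≠ 0 := by
    have := int_add_half_ne_zero (d - 1)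
    push_cast at this
    convert this using 1
    ring
  rw [show (d : ℝ) ^ 2 - 1 / 4 = (d - 1 / 2) * (d + 1 / 2) by ring, inv_sub_inv h2 h1, ← one_div]
  congr 1
  ring

lemma sum_range_inv_sq_sub_quarter (j n : ℕ) :
    ∑ k ∈ Finset.range n, (((j : ℝ) - k) ^ 2 - 1 / 4)⁻¹
      = -(((n : ℝ) - j - 1 / 2)⁻¹ + ((j : ℝ) + 1 / 2)⁻¹) := by
  have h : ∀ k ∈ Finset.range n, (((j : ℝ) - k) ^ 2 - 1 / 4)⁻¹
      = ((j : ℝ) - (k + 1 : ℕ) + 1 / 2)⁻¹ - ((j : ℝ) - (k : ℕ) + 1 / 2)⁻¹ := fun k _ => by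
    have := inv_sq_sub_quarter ((j : ℤ) - k)
    push_cast at this ⊢
    rw [this]
    congr 2
    ring
  rw [Finset.sum_congr rfl h, Finset.sum_range_sub fun k : ℕ => ((j : ℝ) - k + 1 / 2)⁻¹,
    show (j : ℝ) - n + 1 / 2 = -(n - j - 1 / 2) by ring, inv_neg]
  push_cast
  rw [sub_zero]
  ring

lemma sum_Icc_inv_sq_sub_quarter (m : ℕ) :
    ∑ l ∈ Finset.Icc 1 m, ((l : ℝ) ^ 2 - 1 / 4)⁻¹ = 2 - 2 / (2 * (m : ℝ) + 1) := by
  induction m with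
  | zero => simp
  | succ m ih =>
    have h := inv_sq_sub_quarter (m + 1)
    push_cast at h
    rw [Finset.sum_Icc_succ_top (by omega), ih]
    push_cast
    rw [h, show (m : ℝ) + 1 - 1 / 2 = (2 * m + 1) / 2 by ring,
      show (m : ℝ) + 1 + 1 / 2 = (2 * (m + 1) + 1) / 2 by ring, inv_div, inv_div]
    ring

/-- For every `n ≥ 1`, the symmetric `n×n` Toeplitz matrix `T` with entries
`T_{jk} = −(1/π)((j−k)² − 1/4)⁻¹` (so `T_{jj} = 4/π` and `T_{jk} < 0` for `j ≠ k`)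
satisfies `T ≥ (4/(π(2n+1)))·I` in the Loewner order, in particular `T` is positive
definite; moreover `Σ_{l=1}^{n−1} 1/(l² − 1/4) = 2 − 2/(2n−1)`. -/
theorem toeplitz_sqrt_symbol_lower_bound {n : ℕ} (hn : 1 ≤ n)
    (T : Matrix (Fin n) (Fin n) ℝ)
    (hT : ∀ j k : Fin n, T j k = -(1 / Real.pi) * (((j : ℝ) - (k : ℝ)) ^ 2 - 1 / 4)⁻¹) :
    (∀ j, T j j = 4 / Real.pi) ∧
    (∀ j k, j ≠ k → T j k < 0) ∧
    (T - (4 / (Real.pi * (2 * n + 1))) • (1 : Matrix (Fin n) (Fin n) ℝ)).PosSemidef ∧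
    T.PosDef ∧
    ∑ l ∈ Finset.Icc 1 (n - 1), ((l : ℝ) ^ 2 - 1 / 4)⁻¹ = 2 - 2 / (2 * (n : ℝ) - 1) := by
  have hpi := Real.pi_pos
  have hn0 : (0 : ℝ) < n := by exact_mod_cast hn
  have hoff : ∀ j k, j ≠ k → T j k < 0 := fun j k hjk => by
    have h1 : (1 : ℝ) ≤ ((j : ℝ) - k) ^ 2 := by
      have h : ((j : ℕ) : ℤ) - (k : ℕ) ≠ 0 := fun h => hjk (Fin.ext (by omega))
      have : (1 : ℤ) ≤ (((j : ℕ) : ℤ) - (k : ℕ)) ^ 2 := by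
        have := sq_pos_of_ne_zero h
        omega
      exact_mod_cast this
    have h2 : 0 < (((j : ℝ) - k) ^ 2 - 1 / 4)⁻¹ := inv_pos.2 (by linarith)
    rw [hT, neg_mul]
    exact neg_neg_of_pos (by positivity)
  have hrow : ∀ j, 4 / (Real.pi * (2 * n + 1)) ≤ ∑ k, T j k := fun j => by
    have hj : ((j : ℕ) : ℝ) + 1 ≤ n := by exact_mod_cast j.2
    have hj0 : (0 : ℝ) ≤ (j : ℕ) := by positivity
    have hsum : ∑ k, T j k
        = 1 / Real.pi * (((n : ℝ) - (j : ℕ) - 1 / 2)⁻¹ + (((j : ℕ) : ℝ) + 1 / 2)⁻¹) := by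
      simp_rw [hT, ← Finset.mul_sum]
      rw [Fin.sum_univ_eq_sum_range (fun k : ℕ => ((((j : ℕ) : ℝ) - k) ^ 2 - 1 / 4)⁻¹),
        sum_range_inv_sq_sub_quarter]
      ring
    have ha : (n : ℝ)⁻¹ ≤ ((n : ℝ) - (j : ℕ) - 1 / 2)⁻¹ :=
      inv_anti₀ (by linarith) (by linarith)
    have hb : (n : ℝ)⁻¹ ≤ (((j : ℕ) : ℝ) + 1 / 2)⁻¹ :=
      inv_anti₀ (by linarith) (by linarith)
    have hc : 4 / (2 * (n : ℝ) + 1) ≤ 2 * (n : ℝ)⁻¹ := by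
      rw [← div_eq_mul_inv, div_le_div_iff₀ (by positivity) hn0]
      linarith
    rw [hsum, show 4 / (Real.pi * (2 * (n : ℝ) + 1)) = 1 / Real.pi * (4 / (2 * n + 1)) by
      field_simp]
    exact mul_le_mul_of_nonneg_left (by linarith) (by positivity)
  have hpsd : (T - (4 / (Real.pi * (2 * n + 1))) •
      (1 : Matrix (Fin n) (Fin n) ℝ)).PosSemidef := by
    refine posSemidef_of_row_sum_nonneg _ (fun j k => ?_) (fun j k hjk => ?_) fun j => ?_
    · simp only [Matrix.sub_apply, Matrix.smul_apply, one_apply, hT, eq_comm (a := j) (b := k)]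
      rw [sub_sq_comm]
    · simpa [one_apply_ne hjk] using (hoff j k hjk).le
    · simpa [one_apply, Finset.sum_sub_distrib] using hrow j
  refine ⟨fun j => ?_, hoff, hpsd, ?_, ?_⟩
  · rw [hT]
    norm_num
    ring
  · have h := PosDef.posSemidef_add hpsd
      ((PosDef.one (n := Fin n) (R := ℝ)).smul
        (show (0 : ℝ) < 4 / (Real.pi * (2 * n + 1)) by positivity))
    rwa [sub_add_cancel] at h
  · rw [sum_Icc_inv_sq_sub_quarter, Nat.cast_sub hn]
    push_cast
    ring_nf
end
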